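/- arXiv:math/0512202 — 6 statements merged into one kernel-verified Lean document; each statement's English description precedes it below -/
import Mathlib

section
/- Let R be a finite-dimensional graded simple algebra over a field F. Then every nonzero graded right ideal I of R satisfies I = bR for some homogeneous idempotent b ∈ I. -/
section Helpers

variable {G : Type*} [Group G] [DecidableEq G] {F : Type*} [Field F]
    {R : Type*} [NonUnitalRing R] [Module F R]
    (ℬ : G → Submodule F R) [DirectSum.Decomposition ℬ]

theorem aux_dec_left (hmul : ∀ g h : G, ∀ x ∈ ℬ g, ∀ y ∈ ℬ h, x * y ∈ ℬ (g * h))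
    {g : G} {a : R} (ha : a ∈ ℬ g) (x : R) (h : G) :
    ((DirectSum.decompose ℬ (a * x)) (g * h) : R) = a * (DirectSum.decompose ℬ x h : R) := by
  induction x using DirectSum.Decomposition.inductionOn ℬ with
  | zero => simp
  | @homogeneous k m =>
    by_cases hk : k = h
    · subst hk
      rw [DirectSum.decompose_of_mem_same ℬ (hmul g k a ha m m.2),
        DirectSum.decompose_of_mem_same ℬ m.2]
    · rw [DirectSum.decompose_of_mem_ne ℬ (hmul g k a ha m m.2) (by simpa using hk),
        DirectSum.decompose_of_mem_ne ℬ m.2 hk, mul_zero]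
  | add m m' h1 h2 => simp [mul_add, DirectSum.decompose_add, h1, h2]

theorem aux_dec_right (hmul : ∀ g h : G, ∀ x ∈ ℬ g, ∀ y ∈ ℬ h, x * y ∈ ℬ (g * h))
    {g : G} {a : R} (ha : a ∈ ℬ g) (x : R) (h : G) :
    ((DirectSum.decompose ℬ (x * a)) (h * g) : R) = (DirectSum.decompose ℬ x h : R) * a := by
  induction x using DirectSum.Decomposition.inductionOn ℬ with
  | zero => simp
  | @homogeneous k m =>
    by_cases hk : k = h
    · subst hk
      rw [DirectSum.decompose_of_mem_same ℬ (hmul k g m m.2 a ha),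
        DirectSum.decompose_of_mem_same ℬ m.2]
    · rw [DirectSum.decompose_of_mem_ne ℬ (hmul k g m m.2 a ha) (by simpa using hk),
        DirectSum.decompose_of_mem_ne ℬ m.2 hk, zero_mul]
  | add m m' h1 h2 => simp [add_mul, DirectSum.decompose_add, h1, h2]

theorem aux_zero_left (m y : R) (h : ∀ g, (DirectSum.decompose ℬ m g : R) * y = 0) :
    m * y = 0 := by
  classical
  rw [← DirectSum.sum_support_decompose ℬ m, Finset.sum_mul]
  exact Finset.sum_eq_zero fun g _ => h g

theorem aux_zero_right (m y : R) (h : ∀ g, m * (DirectSum.decompose ℬ y g : R) = 0) :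
    m * y = 0 := by
  classical
  rw [← DirectSum.sum_support_decompose ℬ y, Finset.mul_sum]
  exact Finset.sum_eq_zero fun g _ => h g

/-- Graded right ideals. -/
def AuxGRI (M : Submodule F R) : Prop :=
  (∀ x ∈ M, ∀ r : R, x * r ∈ M) ∧
    ∀ x ∈ M, ∀ g : G, ((DirectSum.decompose ℬ x) g : R) ∈ M

/-- A nonzero graded right ideal has nonzero square, witnessed by a homogeneous left factor. -/
theorem aux_square (hmul : ∀ g h : G, ∀ x ∈ ℬ g, ∀ y ∈ ℬ h, x * y ∈ ℬ (g * h))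
    (hR2 : ∃ x y : R, x * y ≠ 0)
    (hsimple : ∀ J : TwoSidedIdeal R,
      (∀ x ∈ J, ∀ g : G, ((DirectSum.decompose ℬ x) g : R) ∈ J) → J = ⊥ ∨ J = ⊤)
    (M : Submodule F R) (hM : AuxGRI ℬ M) (hne : M ≠ ⊥) :
    ∃ g : G, ∃ a ∈ M, a ∈ ℬ g ∧ ∃ m ∈ M, a * m ≠ 0 := by
  by_contra hcon
  push Not at hcon
  have hsq : ∀ x ∈ M, ∀ m ∈ M, x * m = 0 := fun x hx m hm =>
    aux_zero_left ℬ x m fun g => hcon g _ (hM.2 x hx g) (SetLike.coe_mem _) m hm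
  obtain ⟨z, hz, hz0⟩ := (Submodule.ne_bot_iff M).1 hne
  let J : TwoSidedIdeal R := TwoSidedIdeal.mk' {x | ∀ m ∈ M, m * x = 0}
    (by simp)
    (by intro x y hx hy m hm; simp [mul_add, hx m hm, hy m hm])
    (by intro x hx m hm; simp [hx m hm])
    (by intro x y hy m hm; rw [← mul_assoc]; exact hy _ (hM.1 m hm x))
    (by intro x y hx m hm; rw [← mul_assoc, hx m hm, zero_mul])
  have hJ : ∀ x, x ∈ J ↔ ∀ m ∈ M, m * x = 0 := by
    intro x; simp only [J, TwoSidedIdeal.mem_mk', Set.mem_setOf_eq]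
  have hJt : J = ⊤ := by
    refine (hsimple J ?_).resolve_left ?_
    · intro x hx g
      rw [hJ] at hx ⊢
      intro m hm
      refine aux_zero_left ℬ _ _ fun k => ?_
      rw [← aux_dec_left ℬ hmul (SetLike.coe_mem (DirectSum.decompose ℬ m k)) x g,
        hx _ (hM.2 m hm k)]
      simp
    · intro hb
      have : z ∈ J := (hJ z).2 fun m hm => hsq m hm z hz
      rw [hb] at this
      exact hz0 (by simpa using this)
  have hMR : ∀ m ∈ M, ∀ r : R, m * r = 0 := by
    intro m hm r
    have : r ∈ J := by rw [hJt]; trivial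
    exact (hJ r).1 this m hm
  let A : TwoSidedIdeal R := TwoSidedIdeal.mk' {x | ∀ r, x * r = 0}
    (by simp)
    (by intro x y hx hy m; simp [add_mul, hx m, hy m])
    (by intro x hx m; simp [hx m])
    (by intro x y hy m; rw [mul_assoc, hy, mul_zero])
    (by intro x y hx m; rw [mul_assoc, hx])
  have hA : ∀ x, x ∈ A ↔ ∀ r, x * r = 0 := by
    intro x; simp only [A, TwoSidedIdeal.mem_mk', Set.mem_setOf_eq]
  have hAt : A = ⊤ := by
    refine (hsimple A ?_).resolve_left ?_
    · intro x hx g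
      rw [hA] at hx ⊢
      intro r
      refine aux_zero_right ℬ _ _ fun k => ?_
      rw [← aux_dec_right ℬ hmul (SetLike.coe_mem (DirectSum.decompose ℬ r k)) x g, hx]
      simp
    · intro hb
      have : z ∈ A := (hA z).2 (hMR z hz)
      rw [hb] at this
      exact hz0 (by simpa using this)
  obtain ⟨x, y, hxy⟩ := hR2
  have : x ∈ A := by rw [hAt]; trivial
  exact hxy ((hA x).1 this y)

variable [SMulCommClass F R R]

/-- The right annihilator of a homogeneous element in a graded right ideal. -/
theorem aux_ker (hmul : ∀ g h : G, ∀ x ∈ ℬ g, ∀ y ∈ ℬ h, x * y ∈ ℬ (g * h))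
    (M : Submodule F R) (hM : AuxGRI ℬ M) {g : G} {a : R} (ha : a ∈ ℬ g) :
    ∃ K : Submodule F R, AuxGRI ℬ K ∧ ∀ x, x ∈ K ↔ x ∈ M ∧ a * x = 0 := by
  refine ⟨{ carrier := {x | x ∈ M ∧ a * x = 0}
            zero_mem' := ⟨M.zero_mem, mul_zero a⟩
            add_mem' := ?_
            smul_mem' := ?_ }, ⟨?_, ?_⟩, fun x => Iff.rfl⟩
  · rintro x y ⟨hx, hx'⟩ ⟨hy, hy'⟩
    exact ⟨M.add_mem hx hy, by rw [mul_add, hx', hy', add_zero]⟩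
  · rintro c x ⟨hx, hx'⟩
    exact ⟨M.smul_mem c hx, by rw [mul_smul_comm, hx', smul_zero]⟩
  · rintro x ⟨hx, hx'⟩ r
    exact ⟨hM.1 x hx r, by rw [← mul_assoc, hx', zero_mul]⟩
  · rintro x ⟨hx, hx'⟩ h
    refine ⟨hM.2 x hx h, ?_⟩
    rw [← aux_dec_left ℬ hmul ha x h, hx']
    simp

/-- The left multiple of a graded right ideal by a homogeneous element. -/
theorem aux_img (hmul : ∀ g h : G, ∀ x ∈ ℬ g, ∀ y ∈ ℬ h, x * y ∈ ℬ (g * h))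
    (M : Submodule F R) (hM : AuxGRI ℬ M) {g : G} {a : R} (ha : a ∈ ℬ g) :
    ∃ K : Submodule F R, AuxGRI ℬ K ∧ ∀ x, x ∈ K ↔ ∃ m ∈ M, a * m = x := by
  refine ⟨{ carrier := {x | ∃ m ∈ M, a * m = x}
            zero_mem' := ⟨0, M.zero_mem, mul_zero a⟩
            add_mem' := ?_
            smul_mem' := ?_ }, ⟨?_, ?_⟩, fun x => Iff.rfl⟩
  · rintro _ _ ⟨x, hx, rfl⟩ ⟨y, hy, rfl⟩
    exact ⟨x + y, M.add_mem hx hy, mul_add _ _ _⟩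
  · rintro c _ ⟨x, hx, rfl⟩
    exact ⟨c • x, M.smul_mem c hx, mul_smul_comm _ _ _⟩
  · rintro _ ⟨x, hx, rfl⟩ r
    exact ⟨x * r, hM.1 x hx r, (mul_assoc _ _ _).symm⟩
  · rintro _ ⟨x, hx, rfl⟩ h
    refine ⟨_, hM.2 x hx (g⁻¹ * h), ?_⟩
    rw [← aux_dec_left ℬ hmul ha x (g⁻¹ * h), mul_inv_cancel_left]

/-- Every nonzero graded right ideal contains a nonzero idempotent of degree one. -/
theorem aux_idem [FiniteDimensional F R]
    (hmul : ∀ g h : G, ∀ x ∈ ℬ g, ∀ y ∈ ℬ h, x * y ∈ ℬ (g * h))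
    (hR2 : ∃ x y : R, x * y ≠ 0)
    (hsimple : ∀ J : TwoSidedIdeal R,
      (∀ x ∈ J, ∀ g : G, ((DirectSum.decompose ℬ x) g : R) ∈ J) → J = ⊥ ∨ J = ⊤)
    (K : Submodule F R) (hK : AuxGRI ℬ K) (hne : K ≠ ⊥) :
    ∃ c ∈ K, c ∈ ℬ 1 ∧ c * c = c ∧ c ≠ 0 := by
  obtain ⟨M, ⟨hM, hM0, hMK⟩, hmin⟩ := (wellFounded_lt (α := Submodule F R)).has_min
    {M | AuxGRI ℬ M ∧ M ≠ ⊥ ∧ M ≤ K} ⟨K, hK, hne, le_rfl⟩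
  have hmin' : ∀ N : Submodule F R, AuxGRI ℬ N → N ≤ M → N ≠ ⊥ → N = M := by
    intro N hN hle h0
    by_contra hNM
    exact hmin N ⟨hN, h0, hle.trans hMK⟩ (lt_of_le_of_ne hle hNM)
  obtain ⟨g, a, haM, hag, m, hm, ham⟩ := aux_square ℬ hmul hR2 hsimple M hM hM0
  obtain ⟨N, hN, hNmem⟩ := aux_img ℬ hmul M hM hag
  have hNM : N = M := by
    refine hmin' N hN ?_ ?_
    · intro x hx
      obtain ⟨y, hy, rfl⟩ := (hNmem x).1 hx
      exact hM.1 a haM y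
    · exact (Submodule.ne_bot_iff N).2 ⟨a * m, (hNmem _).2 ⟨m, hm, rfl⟩, ham⟩
  obtain ⟨c, hc, hac⟩ := (hNmem a).1 (hNM ▸ haM)
  have hac1 : a * (DirectSum.decompose ℬ c 1 : R) = a := by
    rw [← aux_dec_left ℬ hmul hag c 1, hac, mul_one, DirectSum.decompose_of_mem_same ℬ hag]
  have hc1M : (DirectSum.decompose ℬ c 1 : R) ∈ M := hM.2 c hc 1
  have hc1e : (DirectSum.decompose ℬ c 1 : R) ∈ ℬ 1 := SetLike.coe_mem _
  generalize (DirectSum.decompose ℬ c 1 : R) = d at hac1 hc1M hc1e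
  obtain ⟨L, hL, hLmem⟩ := aux_ker ℬ hmul M hM hag
  have hL0 : L = ⊥ := by
    by_contra h0
    have := hmin' L hL (fun x hx => ((hLmem x).1 hx).1) h0
    exact ham ((hLmem m).1 (this ▸ hm)).2
  refine ⟨d, hMK hc1M, hc1e, ?_, ?_⟩
  · have : d * d - d ∈ L := (hLmem _).2 ⟨M.sub_mem (hM.1 d hc1M d) hc1M, by
      rw [mul_sub, ← mul_assoc, hac1, hac1, sub_self]⟩
    rw [hL0, Submodule.mem_bot] at this
    exact sub_eq_zero.1 this
  · rintro rfl
    rw [mul_zero] at hac1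
    exact ham (by rw [← hac1, zero_mul])

end Helpers


/-- In a finite-dimensional graded simple algebra, every nonzero graded right ideal
is of the form `bR` for a homogeneous idempotent `b` belonging to it. -/
theorem stmt_1 {G : Type*} [Group G] [DecidableEq G] {F : Type*} [Field F]
    {R : Type*} [NonUnitalRing R] [Module F R] [SMulCommClass F R R] [IsScalarTower F R R]
    [FiniteDimensional F R]
    (ℬ : G → Submodule F R) [DirectSum.Decomposition ℬ]
    (hmul : ∀ g h : G, ∀ x ∈ ℬ g, ∀ y ∈ ℬ h, x * y ∈ ℬ (g * h))
    -- `R` is graded simple: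
    (hR2 : ∃ x y : R, x * y ≠ 0)
    (hsimple : ∀ J : TwoSidedIdeal R,
      (∀ x ∈ J, ∀ g : G, ((DirectSum.decompose ℬ x) g : R) ∈ J) → J = ⊥ ∨ J = ⊤)
    -- `I` is a nonzero graded right ideal:
    (I : Submodule F R)
    (hIr : ∀ x ∈ I, ∀ r : R, x * r ∈ I)
    (hIgr : ∀ x ∈ I, ∀ g : G, ((DirectSum.decompose ℬ x) g : R) ∈ I)
    (hIne : I ≠ ⊥) :
    ∃ b ∈ I, (∃ g : G, b ∈ ℬ g) ∧ b * b = b ∧ ∀ x : R, x ∈ I ↔ ∃ r : R, x = b * r := by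
  have hI : AuxGRI ℬ I := ⟨hIr, hIgr⟩
  obtain ⟨K, ⟨b, hbI, hb1, hbb, hK, hKmem⟩, hmin⟩ :=
    (wellFounded_lt (α := Submodule F R)).has_min
    {K | ∃ b ∈ I, b ∈ ℬ 1 ∧ b * b = b ∧ AuxGRI ℬ K ∧ ∀ x, x ∈ K ↔ x ∈ I ∧ b * x = 0}
    ⟨I, 0, I.zero_mem, (ℬ 1).zero_mem, mul_zero 0, hI, fun x => by simp⟩
  have hK0 : K = ⊥ := by
    by_contra h0
    obtain ⟨c, hcK, hc1, hcc, hc0⟩ := aux_idem ℬ hmul hR2 hsimple K hK h0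
    obtain ⟨hcI, hbc⟩ := (hKmem c).1 hcK
    have hcb1 : c * b ∈ ℬ 1 := by simpa using hmul 1 1 c hc1 b hb1
    have hb'1 : b + c - c * b ∈ ℬ 1 := (ℬ 1).sub_mem ((ℬ 1).add_mem hb1 hc1) hcb1
    have hb'I : b + c - c * b ∈ I := I.sub_mem (I.add_mem hbI hcI) (hIr c hcI b)
    have e1 : (b + c - c * b) * b = b := by
      rw [sub_mul, add_mul, mul_assoc, hbb]; abel
    have e2 : (b + c - c * b) * c = c := by
      rw [sub_mul, add_mul, mul_assoc, hbc, hcc]; simp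
    have e3 : b * (b + c - c * b) = b := by
      rw [mul_sub, mul_add, ← mul_assoc, hbc, hbb]; simp
    have hidem : (b + c - c * b) * (b + c - c * b) = b + c - c * b := by
      rw [mul_sub, mul_add, ← mul_assoc, e1, e2]
    generalize b + c - c * b = b' at hb'1 hb'I e1 e2 e3 hidem
    obtain ⟨L, hL, hLmem⟩ := aux_ker ℬ hmul I hI hb'1
    refine hmin L ⟨b', hb'I, hb'1, hidem, hL, hLmem⟩ (lt_of_le_of_ne ?_ ?_)
    · intro x hx
      obtain ⟨hxI, hx0⟩ := (hLmem x).1 hx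
      exact (hKmem x).2 ⟨hxI, by rw [← e3, mul_assoc, hx0, mul_zero]⟩
    · rintro rfl
      exact hc0 (e2 ▸ ((hLmem c).1 hcK).2)
  refine ⟨b, hbI, ⟨1, hb1⟩, hbb, fun x => ⟨fun hx => ⟨x, ?_⟩, ?_⟩⟩
  · have : x - b * x ∈ K := (hKmem _).2 ⟨I.sub_mem hx (hIr b hbI x), by
      rw [mul_sub, ← mul_assoc, hbb, sub_self]⟩
    rw [hK0, Submodule.mem_bot] at this
    exact sub_eq_zero.1 this
  · rintro ⟨r, rfl⟩
    exact hIr b hbI r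
end

section
/- Every finite-dimensional graded simple algebra over an arbitrary field is unitary, i.e., possesses a two-sided multiplicative identity. -/
set_option linter.unusedSectionVars false

namespace GrSimple

variable {G : Type*} [Group G] [DecidableEq G] {F : Type*} [Field F]
    {R : Type*} [NonUnitalRing R] [Module F R] [SMulCommClass F R R] [IsScalarTower F R R]
    (ℬ : G → Submodule F R) [DirectSum.Decomposition ℬ]

/-- Homogeneous component. -/
def cp (g : G) (x : R) : R := ((DirectSum.decompose ℬ x) g : R)

lemma cp_mem (g : G) (x : R) : cp ℬ g x ∈ ℬ g := ((DirectSum.decompose ℬ x) g).2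

lemma cp_zero (g : G) : cp ℬ g 0 = 0 := by simp [cp]

lemma cp_add (g : G) (x y : R) : cp ℬ g (x + y) = cp ℬ g x + cp ℬ g y := by
  simp [cp, DirectSum.decompose_add]

lemma cp_same {g : G} {x : R} (hx : x ∈ ℬ g) : cp ℬ g x = x :=
  DirectSum.decompose_of_mem_same ℬ hx

lemma cp_ne {g h : G} {x : R} (hx : x ∈ ℬ g) (hgh : g ≠ h) : cp ℬ h x = 0 :=
  DirectSum.decompose_of_mem_ne ℬ hx hgh

lemma sum_cp (x : R) : ∃ s : Finset G, x = ∑ g ∈ s, cp ℬ g x := by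
  classical
  exact ⟨_, (DirectSum.sum_support_decompose ℬ x).symm⟩

lemma cp_mul_right (hmul : ∀ g h : G, ∀ x ∈ ℬ g, ∀ y ∈ ℬ h, x * y ∈ ℬ (g * h))
    {h : G} {a : R} (ha : a ∈ ℬ h) (g : G) (x : R) :
    cp ℬ (g * h) (x * a) = cp ℬ g x * a := by
  induction x using DirectSum.Decomposition.inductionOn ℬ with
  | zero => simp [cp_zero]
  | @homogeneous i m =>
    by_cases hi : i = g
    · subst hi
      rw [cp_same ℬ m.2, cp_same ℬ (hmul _ _ _ m.2 _ ha)]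
    · rw [cp_ne ℬ m.2 hi, cp_ne ℬ (hmul _ _ _ m.2 _ ha) (by simpa using hi), zero_mul]
  | add x y hx hy => rw [add_mul, cp_add, cp_add, hx, hy, add_mul]

lemma cp_mul_left (hmul : ∀ g h : G, ∀ x ∈ ℬ g, ∀ y ∈ ℬ h, x * y ∈ ℬ (g * h))
    {h : G} {a : R} (ha : a ∈ ℬ h) (g : G) (x : R) :
    cp ℬ (h * g) (a * x) = a * cp ℬ g x := by
  induction x using DirectSum.Decomposition.inductionOn ℬ with
  | zero => simp [cp_zero]
  | @homogeneous i m =>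
    by_cases hi : i = g
    · subst hi
      rw [cp_same ℬ m.2, cp_same ℬ (hmul _ _ _ ha _ m.2)]
    · rw [cp_ne ℬ m.2 hi, cp_ne ℬ (hmul _ _ _ ha _ m.2) (by simpa using hi), mul_zero]
  | add x y hx hy => rw [mul_add, cp_add, cp_add, hx, hy, mul_add]

/-- Graded left ideals. -/
def IsGrLeft (L : Submodule F R) : Prop :=
  (∀ r : R, ∀ x ∈ L, r * x ∈ L) ∧ ∀ g : G, ∀ x ∈ L, cp ℬ g x ∈ L

lemma simple' (hsimple : ∀ I : TwoSidedIdeal R,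
      (∀ x ∈ I, ∀ g : G, ((DirectSum.decompose ℬ x) g : R) ∈ I) → I = ⊥ ∨ I = ⊤)
    (L : Submodule F R) (hL : IsGrLeft ℬ L) (hr : ∀ r : R, ∀ x ∈ L, x * r ∈ L) :
    L = ⊥ ∨ L = ⊤ := by
  let I : TwoSidedIdeal R := TwoSidedIdeal.mk' (L : Set R) L.zero_mem
    (fun hx hy => L.add_mem hx hy) (fun hx => L.neg_mem hx)
    (fun {x y} hy => hL.1 x y hy) (fun {x y} hx => hr y x hx)
  have hI : ∀ x, x ∈ I ↔ x ∈ L := fun x => by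
    simp [I, TwoSidedIdeal.mem_mk']
  rcases hsimple I (fun x hx g => (hI _).2 (hL.2 g x ((hI x).1 hx))) with h | h
  · left
    rw [eq_bot_iff]
    intro x hx
    have := (hI x).2 hx
    rw [h] at this
    simpa [TwoSidedIdeal.mem_bot] using this
  · right
    rw [eq_top_iff]
    intro x _
    rw [← hI, h]
    trivial

lemma annR (hmul : ∀ g h : G, ∀ x ∈ ℬ g, ∀ y ∈ ℬ h, x * y ∈ ℬ (g * h))
    (hR2 : ∃ x y : R, x * y ≠ 0)
    (hsimple : ∀ I : TwoSidedIdeal R,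
      (∀ x ∈ I, ∀ g : G, ((DirectSum.decompose ℬ x) g : R) ∈ I) → I = ⊥ ∨ I = ⊤)
    (z : R) (hz : ∀ r : R, r * z = 0) : z = 0 := by
  let K : Submodule F R :=
    { carrier := {z | ∀ r : R, r * z = 0}
      zero_mem' := fun r => mul_zero r
      add_mem' := fun {x y} hx hy r => by rw [mul_add, hx r, hy r, add_zero]
      smul_mem' := fun c x hx r => by rw [mul_smul_comm, hx r, smul_zero] }
  have hK : ∀ z, z ∈ K ↔ ∀ r : R, r * z = 0 := fun _ => Iff.rfl
  have h := simple' ℬ hsimple K ⟨?_, ?_⟩ ?_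
  · rcases h with h | h
    · have : z ∈ K := hz
      rw [h] at this
      simpa using this
    · obtain ⟨x, y, hxy⟩ := hR2
      exact absurd ((hK y).1 (h ▸ Submodule.mem_top) x) hxy
  · intro r x hx s
    rw [← mul_assoc, hx]
  · intro g x hx s
    obtain ⟨t, ht⟩ := sum_cp ℬ s
    rw [ht, Finset.sum_mul]
    refine Finset.sum_eq_zero fun i _ => ?_
    rw [← cp_mul_left ℬ hmul (cp_mem ℬ i s), hx, cp_zero]
  · intro r x hx s
    rw [← mul_assoc, hx, zero_mul]

lemma sq_ne (hmul : ∀ g h : G, ∀ x ∈ ℬ g, ∀ y ∈ ℬ h, x * y ∈ ℬ (g * h))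
    (hR2 : ∃ x y : R, x * y ≠ 0)
    (hsimple : ∀ I : TwoSidedIdeal R,
      (∀ x ∈ I, ∀ g : G, ((DirectSum.decompose ℬ x) g : R) ∈ I) → I = ⊥ ∨ I = ⊤)
    (L : Submodule F R) (hL : IsGrLeft ℬ L) (h0 : L ≠ ⊥) : ∃ x ∈ L, ∃ y ∈ L, x * y ≠ 0 := by
  by_contra! hc
  let K : Submodule F R :=
    { carrier := {z | ∀ y ∈ L, z * y = 0}
      zero_mem' := fun r _ => zero_mul r
      add_mem' := fun {x y} hx hy r hr => by rw [add_mul, hx r hr, hy r hr, add_zero]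
      smul_mem' := fun c x hx r hr => by rw [smul_mul_assoc, hx r hr, smul_zero] }
  have hK : ∀ z, z ∈ K ↔ ∀ y ∈ L, z * y = 0 := fun _ => Iff.rfl
  apply h0
  rw [eq_bot_iff]
  intro y hy
  have h := simple' ℬ hsimple K ⟨?_, ?_⟩ ?_
  · rcases h with h | h
    · have : y ∈ K := fun w hw => hc y hy w hw
      rwa [h] at this
    · have := annR ℬ hmul hR2 hsimple y
        (fun r => (hK r).1 (h ▸ Submodule.mem_top) y hy)
      simpa using this
  · intro r x hx s hs
    rw [mul_assoc, hx s hs, mul_zero]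
  · intro g x hx s hs
    obtain ⟨t, ht⟩ := sum_cp ℬ s
    rw [ht, Finset.mul_sum]
    refine Finset.sum_eq_zero fun i _ => ?_
    rw [← cp_mul_right ℬ hmul (cp_mem ℬ i s), hx _ (hL.2 i s hs), cp_zero]
  · intro r x hx s hs
    rw [mul_assoc]
    exact hx _ (hL.1 r s hs)

lemma exists_idem [FiniteDimensional F R]
    (hmul : ∀ g h : G, ∀ x ∈ ℬ g, ∀ y ∈ ℬ h, x * y ∈ ℬ (g * h))
    (hR2 : ∃ x y : R, x * y ≠ 0)
    (hsimple : ∀ I : TwoSidedIdeal R,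
      (∀ x ∈ I, ∀ g : G, ((DirectSum.decompose ℬ x) g : R) ∈ I) → I = ⊥ ∨ I = ⊤)
    (L₀ : Submodule F R) (hL₀ : IsGrLeft ℬ L₀) (h0 : L₀ ≠ ⊥) :
    ∃ e ∈ L₀, e ∈ ℬ 1 ∧ e ≠ 0 ∧ e * e = e := by
  obtain ⟨L, ⟨hLL, hL, hLne⟩, hmin⟩ := (wellFounded_lt (α := Submodule F R)).has_min
    {N | N ≤ L₀ ∧ IsGrLeft ℬ N ∧ N ≠ ⊥} ⟨L₀, le_rfl, hL₀, h0⟩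
  have hmin' : ∀ N : Submodule F R, N ≤ L → IsGrLeft ℬ N → N ≠ ⊥ → N = L := by
    intro N hN hG hne
    by_contra h
    exact hmin N ⟨hN.trans hLL, hG, hne⟩ (lt_of_le_of_ne hN h)
  obtain ⟨x, hx, y, hy, hxy⟩ := sq_ne ℬ hmul hR2 hsimple L hL hLne
  obtain ⟨h, a, ha, haL, hxa⟩ : ∃ h : G, ∃ a ∈ ℬ h, a ∈ L ∧ x * a ≠ 0 := by
    by_contra! hc
    apply hxy
    obtain ⟨t, ht⟩ := sum_cp ℬ y
    rw [ht, Finset.mul_sum]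
    exact Finset.sum_eq_zero fun i _ => hc i _ (cp_mem ℬ i y) (hL.2 i y hy)
  have ha0 : a ≠ 0 := by rintro rfl; simp at hxa
  let M : Submodule F R := L.map (LinearMap.mulRight F a)
  have hM : ∀ z, z ∈ M ↔ ∃ w ∈ L, w * a = z := fun z => by simp [M]
  have hML : M = L := by
    apply hmin'
    · intro z hz
      obtain ⟨w, -, rfl⟩ := (hM z).1 hz
      exact hL.1 _ _ haL
    · constructor
      · intro r z hz
        obtain ⟨w, hw, rfl⟩ := (hM z).1 hz
        exact (hM _).2 ⟨r * w, hL.1 _ _ hw, mul_assoc _ _ _⟩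
      · intro g z hz
        obtain ⟨w, hw, rfl⟩ := (hM z).1 hz
        refine (hM _).2 ⟨cp ℬ (g * h⁻¹) w, hL.2 _ _ hw, ?_⟩
        rw [← cp_mul_right ℬ hmul ha]
        simp
    · intro hb
      have : x * a ∈ M := (hM _).2 ⟨x, hx, rfl⟩
      rw [hb] at this
      exact hxa (by simpa using this)
  obtain ⟨e', he', hea'⟩ := (hM a).1 (hML ▸ haL)
  have hea : cp ℬ 1 e' * a = a := by
    rw [← cp_mul_right ℬ hmul ha, hea', one_mul, cp_same ℬ ha]
  have heL : cp ℬ 1 e' ∈ L := hL.2 _ _ he'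
  have he1 := cp_mem ℬ 1 e'
  generalize cp ℬ 1 e' = e at hea heL he1
  refine ⟨e, hLL heL, he1, ?_, ?_⟩
  · rintro rfl
    exact ha0 (by simpa using hea.symm)
  · let N : Submodule F R := L ⊓ LinearMap.ker (LinearMap.mulRight F a)
    have hN : ∀ z, z ∈ N ↔ z ∈ L ∧ z * a = 0 := fun z => by simp [N]
    have hN0 : N = ⊥ := by
      by_contra hne
      have := hmin' N inf_le_left ⟨?_, ?_⟩ hne
      · exact hxa ((hN x).1 (this ▸ hx)).2
      · intro r z hz
        rw [hN] at hz ⊢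
        exact ⟨hL.1 _ _ hz.1, by rw [mul_assoc, hz.2, mul_zero]⟩
      · intro g z hz
        rw [hN] at hz ⊢
        exact ⟨hL.2 _ _ hz.1, by rw [← cp_mul_right ℬ hmul ha, hz.2, cp_zero]⟩
    have : e * e - e ∈ N := (hN _).2
      ⟨L.sub_mem (hL.1 _ _ heL) heL, by rw [sub_mul, mul_assoc, hea, hea, sub_self]⟩
    rw [hN0] at this
    exact sub_eq_zero.1 (by simpa using this)

end GrSimple

/-- A finite-dimensional graded simple algebra over an arbitrary field is unitary. -/
theorem stmt_2 {G : Type*} [Group G] [DecidableEq G] {F : Type*} [Field F]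
    {R : Type*} [NonUnitalRing R] [Module F R] [SMulCommClass F R R] [IsScalarTower F R R]
    [FiniteDimensional F R]
    (ℬ : G → Submodule F R) [DirectSum.Decomposition ℬ]
    (hmul : ∀ g h : G, ∀ x ∈ ℬ g, ∀ y ∈ ℬ h, x * y ∈ ℬ (g * h))
    -- graded simple:
    (hR2 : ∃ x y : R, x * y ≠ 0)
    (hsimple : ∀ I : TwoSidedIdeal R,
      (∀ x ∈ I, ∀ g : G, ((DirectSum.decompose ℬ x) g : R) ∈ I) → I = ⊥ ∨ I = ⊤) :
    ∃ u : R, ∀ x : R, u * x = x ∧ x * u = x := by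
  obtain ⟨K, ⟨e, he1, hee, rfl⟩, hmin⟩ := (wellFounded_lt (α := Submodule F R)).has_min
    {N | ∃ e ∈ ℬ 1, e * e = e ∧ N = LinearMap.ker (LinearMap.mulRight F e)}
    ⟨_, 0, (ℬ 1).zero_mem, mul_zero 0, rfl⟩
  have hK : ∀ e z : R, z ∈ LinearMap.ker (LinearMap.mulRight F e) ↔ z * e = 0 :=
    fun e z => by simp
  have h0 : LinearMap.ker (LinearMap.mulRight F e) = ⊥ := by
    by_contra hne
    have hg : GrSimple.IsGrLeft ℬ (LinearMap.ker (LinearMap.mulRight F e)) := by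
      constructor
      · intro r z hz
        rw [hK] at hz ⊢
        rw [mul_assoc, hz, mul_zero]
      · intro g z hz
        rw [hK] at hz ⊢
        rw [← GrSimple.cp_mul_right ℬ hmul he1, hz, GrSimple.cp_zero]
    obtain ⟨f, hf, hf1, hf0, hff⟩ := GrSimple.exists_idem ℬ hmul hR2 hsimple _ hg hne
    · rw [hK] at hf
      have h1 : (e + f - e * f) * e = e := by
        rw [sub_mul, add_mul, mul_assoc e f e, hf, hee]; simp
      have h2 : (e + f - e * f) * f = f := by
        rw [sub_mul, add_mul, mul_assoc e f f, hff]; simp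
      have h3 : f * (e + f - e * f) = f := by
        rw [mul_sub, mul_add, ← mul_assoc f e f, hf, hff]; simp
      refine hmin _ ⟨e + f - e * f, ?_, ?_, rfl⟩ ?_
      · exact (ℬ 1).sub_mem ((ℬ 1).add_mem he1 hf1) (by simpa using hmul 1 1 e he1 f hf1)
      · rw [mul_sub, mul_add, ← mul_assoc _ e f, h1, h2]
      · refine lt_of_le_of_ne ?_ ?_
        · intro z hz
          rw [hK] at hz ⊢
          rw [← h1, ← mul_assoc, hz, zero_mul]
        · intro heq
          have : f ∈ LinearMap.ker (LinearMap.mulRight F e) := (hK _ _).2 hf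
          rw [← heq, hK, h3] at this
          exact hf0 this
  have hr : ∀ x, x * e = x := by
    intro x
    have : x * e - x ∈ LinearMap.ker (LinearMap.mulRight F e) := by
      rw [hK, sub_mul, mul_assoc, hee, sub_self]
    rw [h0] at this
    exact sub_eq_zero.1 (by simpa using this)
  refine ⟨e, fun x => ⟨?_, hr x⟩⟩
  refine sub_eq_zero.1 (GrSimple.annR ℬ hmul hR2 hsimple _ fun r => ?_)
  rw [mul_sub, ← mul_assoc, hr, sub_self]
end

section
/- Let R be a G-graded ring with finite support such that R has no nonzero nilpotent (two-sided) ideals. If I is a nilpotent ideal of the identity component R_e, then the two-sided ideal RIR of R is nilpotent; consequently I = 0 and R_e has no nonzero nilpotent ideals. -/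
open Pointwise

/-- Prefix products of a sequence. -/
def prefixProd {R : Type*} [Monoid R] (x : ℕ → R) : ℕ → R
  | 0 => 1
  | n + 1 => prefixProd x n * x n

lemma prefixProd_segment {G R : Type*} [Group G] [Ring R] (ℬ : G → AddSubgroup R)
    (hmul : ∀ g h : G, ∀ x ∈ ℬ g, ∀ y ∈ ℬ h, x * y ∈ ℬ (g * h))
    (I : AddSubgroup R) (hIe : (I : Set R) ⊆ ℬ (1 : G))
    (g : ℕ → G) (x : ℕ → R) (hx : ∀ n, ∃ i ∈ I, ∃ r ∈ ℬ (g n), x n = i * r) (a b : ℕ) :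
    ∃ i ∈ I, ∃ r ∈ ℬ ((prefixProd g a)⁻¹ * prefixProd g (a + b + 1)),
      prefixProd x (a + b + 1) = prefixProd x a * (i * r) := by
  induction b with
  | zero =>
    obtain ⟨i, hi, r, hr, h⟩ := hx a
    refine ⟨i, hi, r, ?_, ?_⟩
    · simpa [prefixProd] using hr
    · simp [prefixProd, h]
  | succ b ih =>
    obtain ⟨i, hi, r, hr, h⟩ := ih
    obtain ⟨j, hj, s, hs, h'⟩ := hx (a + b + 1)
    refine ⟨i, hi, r * (j * s), ?_, ?_⟩
    · have h1 := hmul _ _ _ (hIe hj) _ hs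
      have h2 := hmul _ _ _ hr _ h1
      have e : (prefixProd g a)⁻¹ * prefixProd g (a + (b + 1) + 1) =
          (prefixProd g a)⁻¹ * prefixProd g (a + b + 1) * (1 * g (a + b + 1)) := by
        rw [one_mul, mul_assoc]; rfl
      rw [e]; exact h2
    · change prefixProd x (a + b + 1) * x (a + b + 1) = _
      rw [h, h']; simp only [mul_assoc]

lemma prefixProd_pow {G R : Type*} [Group G] [Ring R] (ℬ : G → AddSubgroup R)
    (hmul : ∀ g h : G, ∀ x ∈ ℬ g, ∀ y ∈ ℬ h, x * y ∈ ℬ (g * h))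
    (I : AddSubgroup R) (hIe : (I : Set R) ⊆ ℬ (1 : G))
    (hIideal : ∀ a ∈ ℬ (1 : G), ∀ x ∈ I, a * x ∈ I ∧ x * a ∈ I)
    (g : ℕ → G) (x : ℕ → R) (hx : ∀ n, ∃ i ∈ I, ∃ r ∈ ℬ (g n), x n = i * r)
    (t : G) (m : ℕ) : ∀ (N : ℕ) (F : Finset ℕ), F.card = m + 1 →
      (∀ j ∈ F, j ≤ N ∧ prefixProd g j = t) →
      ∃ b ≤ N, prefixProd g b = t ∧ ∃ c, ∃ y ∈ (I : Set R) ^ m, prefixProd x b = c * y := by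
  induction m with
  | zero =>
    intro N F hF h
    obtain ⟨j, hj⟩ := Finset.card_pos.mp (by omega : 0 < F.card)
    exact ⟨j, (h j hj).1, (h j hj).2, prefixProd x j, 1, by simp, by simp⟩
  | succ m ih =>
    intro N F hF h
    have hne : F.Nonempty := Finset.card_pos.mp (by omega)
    have hM := F.max'_mem hne
    set j := F.max' hne with hj
    obtain ⟨b, hb, hbt, c, y, hy, hc⟩ := ih (j - 1) (F.erase j)
      (by rw [Finset.card_erase_of_mem hM]; omega) (by
        intro k hk
        have h1 := Finset.lt_max'_of_mem_erase_max' F hne hk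
        exact ⟨by omega, (h k (Finset.mem_of_mem_erase hk)).2⟩)
    have hjpos : 0 < j := by
      obtain ⟨k, hk⟩ := Finset.card_pos.mp
        (by rw [Finset.card_erase_of_mem hM]; omega : 0 < (F.erase j).card)
      have h1 := Finset.lt_max'_of_mem_erase_max' F hne hk
      omega
    obtain ⟨i, hi, r, hr, he⟩ := prefixProd_segment ℬ hmul I hIe g x hx b (j - 1 - b)
    have e : b + (j - 1 - b) + 1 = j := by omega
    rw [e] at hr he
    rw [(h j hM).2, hbt, inv_mul_cancel] at hr
    refine ⟨j, (h j hM).1, (h j hM).2, c, y * (i * r), ?_, ?_⟩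
    · rw [pow_succ]
      exact Set.mul_mem_mul hy (hIideal r hr i hi).2
    · rw [he, hc, mul_assoc]

lemma prefixProd_zero {G R : Type*} [Group G] [Ring R] (ℬ : G → AddSubgroup R)
    (hmul : ∀ g h : G, ∀ x ∈ ℬ g, ∀ y ∈ ℬ h, x * y ∈ ℬ (g * h))
    (hsupp : {g : G | ℬ g ≠ ⊥}.Finite)
    (I : AddSubgroup R) (hIe : (I : Set R) ⊆ ℬ (1 : G))
    (hIideal : ∀ a ∈ ℬ (1 : G), ∀ x ∈ I, a * x ∈ I ∧ x * a ∈ I)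
    (m : ℕ) (hm : (I : Set R) ^ m ⊆ {0})
    (g : ℕ → G) (x : ℕ → R) (hx : ∀ n, ∃ i ∈ I, ∃ r ∈ ℬ (g n), x n = i * r) :
    prefixProd x (hsupp.toFinset.card * m + 1) = 0 := by
  classical
  set N := hsupp.toFinset.card * m + 1 with hN
  by_contra hne
  have hz : ∀ k b, prefixProd x b = 0 → prefixProd x (b + k) = 0 := by
    intro k b hb
    induction k with
    | zero => exact hb
    | succ k ih => change prefixProd x (b + k) * _ = 0; rw [ih, zero_mul]
  have hz' : ∀ b ≤ N, prefixProd x b ≠ 0 := by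
    intro b hb h0
    apply hne
    have := hz (N - b) b h0
    rwa [Nat.add_sub_cancel' hb] at this
  have hmaps : ∀ j ∈ Finset.Icc 1 N, prefixProd g j ∈ hsupp.toFinset := by
    intro j hj
    rw [Finset.mem_Icc] at hj
    rw [Set.Finite.mem_toFinset]
    intro hbot
    obtain ⟨i, hi, r, hr, he⟩ := prefixProd_segment ℬ hmul I hIe g x hx 0 (j - 1)
    have e : 0 + (j - 1) + 1 = j := by omega
    rw [e] at hr he
    have h1 := hmul _ _ _ (hIe hi) _ hr
    simp only [prefixProd, inv_one, one_mul] at h1 he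
    rw [hbot] at h1
    exact hz' j hj.2 (he.trans (by simpa using h1))
  obtain ⟨t, -, ht⟩ := Finset.exists_lt_card_fiber_of_mul_lt_card_of_maps_to hmaps
    (n := m) (by simp [hN])
  obtain ⟨F, hF, hFc⟩ := Finset.exists_subset_card_eq (Nat.succ_le_of_lt ht)
  obtain ⟨b, hb, -, c, y, hy, hc⟩ := prefixProd_pow ℬ hmul I hIe hIideal g x hx t m N F hFc (by
    intro j hj
    have := hF hj
    rw [Finset.mem_filter, Finset.mem_Icc] at this
    exact ⟨this.1.2, this.2⟩)
  apply hz' b hb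
  have : y = 0 := hm hy
  rw [hc, this, mul_zero]

lemma exists_prefixProd {R : Type*} [Ring R] (X : Set R) (h0 : (0 : R) ∈ X) (n : ℕ) :
    ∀ y ∈ X ^ n, ∃ x : ℕ → R, (∀ k, x k ∈ X) ∧ y = prefixProd x n := by
  intro y hy
  rw [Set.mem_pow] at hy
  obtain ⟨f, hf⟩ := hy
  refine ⟨fun k => if h : k < n then f ⟨k, h⟩ else 0, ?_, ?_⟩
  · intro k
    dsimp only
    split_ifs
    · exact (f _).2
    · exact h0
  · have key : ∀ (x : ℕ → R) (n : ℕ), (List.ofFn fun i : Fin n => x i).prod = prefixProd x n := by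
      intro x n
      induction n with
      | zero => simp [prefixProd]
      | succ n ih => rw [List.ofFn_succ', List.concat_eq_append, List.prod_append]; simp [prefixProd, ← ih]
    rw [← hf, ← key]
    simp

/-- In a graded ring `R` with finite support and no nonzero nilpotent two-sided ideals,
for any nilpotent ideal `I` of the identity component `R_e`, the two-sided ideal
`RIR` generated by `I` is nilpotent; consequently `I = 0`. -/
theorem stmt_9 {G : Type*} [Group G] [DecidableEq G]
    {R : Type*} [Ring R]
    (ℬ : G → AddSubgroup R) [DirectSum.Decomposition ℬ]
    (hmul : ∀ g h : G, ∀ x ∈ ℬ g, ∀ y ∈ ℬ h, x * y ∈ ℬ (g * h))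
    -- finite support:
    (hsupp : {g : G | ℬ g ≠ ⊥}.Finite)
    -- `R` has no nonzero nilpotent two-sided ideals:
    (hsemiprime : ∀ J : TwoSidedIdeal R, (∃ n : ℕ, 0 < n ∧ (J : Set R) ^ n ⊆ {0}) → J = ⊥)
    -- `I` is a nilpotent ideal of the identity component `R_e`:
    (I : AddSubgroup R) (hIe : (I : Set R) ⊆ ℬ (1 : G))
    (hIideal : ∀ a ∈ ℬ (1 : G), ∀ x ∈ I, a * x ∈ I ∧ x * a ∈ I)
    (hInil : ∃ n : ℕ, 0 < n ∧ (I : Set R) ^ n ⊆ {0}) :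
    (∃ n : ℕ, 0 < n ∧ ((TwoSidedIdeal.span (I : Set R) : TwoSidedIdeal R) : Set R) ^ n ⊆ {0}) ∧
      I = ⊥ := by
  classical
  have hspan : ∃ n : ℕ, 0 < n ∧
      ((TwoSidedIdeal.span (I : Set R) : TwoSidedIdeal R) : Set R) ^ n ⊆ {0} := by
    obtain ⟨m, -, hm⟩ := hInil
    set N := hsupp.toFinset.card * m + 1 with hN
    let X : Set R := {x | ∃ g : G, ∃ i ∈ I, ∃ r ∈ ℬ g, x = i * r}
    have hX0 : (0 : R) ∈ X := ⟨1, 0, I.zero_mem, 0, (ℬ 1).zero_mem, by simp⟩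
    have hXN : X ^ N ⊆ {0} := by
      intro y hy
      obtain ⟨x, hx, rfl⟩ := exists_prefixProd X hX0 N y hy
      choose g hg using hx
      exact prefixProd_zero ℬ hmul hsupp I hIe hIideal m hm g x hg
    let M : Submodule ℤ R := Submodule.span ℤ X
    have hMN : M ^ N = ⊥ := by
      rw [Submodule.span_pow, Submodule.span_eq_bot]
      exact fun y hy => hXN hy
    have hIM : ∀ i ∈ I, ∀ r : R, i * r ∈ M := by
      intro i hi r
      induction r using DirectSum.Decomposition.inductionOn ℬ with
      | zero => simp
      | @homogeneous g r => exact Submodule.subset_span ⟨g, i, hi, r, r.2, rfl⟩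
      | add a b ha hb => rw [mul_add]; exact M.add_mem ha hb
    have hMtop : M * ⊤ ≤ M := by
      rw [Submodule.mul_le]
      intro a ha s _
      induction ha using Submodule.span_induction with
      | mem x hx =>
        obtain ⟨g, i, hi, r, hr, rfl⟩ := hx
        rw [mul_assoc]; exact hIM i hi _
      | zero => simp
      | add x y _ _ hx hy => rw [add_mul]; exact M.add_mem hx hy
      | smul c x _ hx => rw [smul_mul_assoc]; exact M.smul_mem c hx
    let T : Submodule ℤ R := ⊤ * M
    have hTl : ⊤ * T ≤ T := by
      change ⊤ * (⊤ * M) ≤ ⊤ * M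
      rw [← mul_assoc]; exact mul_le_mul_left le_top _
    have hTr : T * ⊤ ≤ T := by
      change (⊤ * M) * ⊤ ≤ ⊤ * M
      rw [mul_assoc]; exact mul_le_mul_right hMtop _
    have hTn : ∀ n : ℕ, T ^ (n + 1) ≤ ⊤ * M ^ (n + 1) := by
      intro n
      induction n with
      | zero => simp [T]
      | succ n ih =>
        calc T ^ (n + 1 + 1) = T ^ (n + 1) * T := pow_succ _ _
          _ ≤ (⊤ * M ^ (n + 1)) * (⊤ * M) := mul_le_mul' ih le_rfl
          _ = ⊤ * M ^ n * (M * ⊤) * M := by rw [pow_succ]; simp only [mul_assoc]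
          _ ≤ ⊤ * M ^ n * M * M := mul_le_mul' (mul_le_mul' le_rfl hMtop) le_rfl
          _ = ⊤ * M ^ (n + 1 + 1) := by simp only [pow_succ, mul_assoc]
    let J : TwoSidedIdeal R := TwoSidedIdeal.mk' (T : Set R) T.zero_mem
      (fun ha hb => T.add_mem ha hb) (fun ha => T.neg_mem ha)
      (fun {x y} hy => hTl (Submodule.mul_mem_mul Submodule.mem_top hy))
      (fun {x y} hx => hTr (Submodule.mul_mem_mul hx Submodule.mem_top))
    have hJ : TwoSidedIdeal.span (I : Set R) ≤ J := by
      rw [TwoSidedIdeal.span_le]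
      intro i hi
      have h1 : i ∈ M := by simpa using hIM i hi 1
      have h2 : (1 : R) * i ∈ T := Submodule.mul_mem_mul Submodule.mem_top h1
      rw [one_mul] at h2
      simpa [J] using h2
    refine ⟨N, by omega, ?_⟩
    have hsub : ((TwoSidedIdeal.span (I : Set R) : TwoSidedIdeal R) : Set R) ⊆ (T : Set R) := by
      intro y hy
      have := hJ hy
      simpa [J] using this
    intro y hy
    have h1 : y ∈ T ^ N := Submodule.pow_subset_pow _ (Set.pow_subset_pow_left hsub hy)
    have h2 := hTn _ h1
    rw [← hN, hMN] at h2
    simpa using h2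
  refine ⟨hspan, ?_⟩
  have hb := hsemiprime _ hspan
  rw [eq_bot_iff]
  intro i hi
  have h1 : i ∈ TwoSidedIdeal.span (I : Set R) := TwoSidedIdeal.subset_span hi
  rw [hb] at h1
  simpa using h1
end

section
/- Let R be a finite-dimensional graded simple algebra over an algebraically closed field F such that the identity component A = R_e is a simple algebra. Then R = AC ≅ A ⊗ C, where A ≅ M_k(F) carries the trivial G-grading, C is the centralizer of A in R, C is a graded subalgebra with dim C_e = 1, and C is a graded division algebra. -/
/-- The identity component `R_e = ℬ 1` of a graded algebra, as a non-unital
subalgebra. -/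
def identityComponent {G : Type*} [Group G] {F : Type*} [Field F]
    {R : Type*} [NonUnitalRing R] [Module F R] [SMulCommClass F R R] [IsScalarTower F R R]
    (ℬ : G → Submodule F R)
    (hmul : ∀ g h : G, ∀ x ∈ ℬ g, ∀ y ∈ ℬ h, x * y ∈ ℬ (g * h)) :
    NonUnitalSubalgebra F R where
  carrier := (ℬ (1 : G) : Set R)
  add_mem' := fun hx hy => (ℬ (1 : G)).add_mem hx hy
  zero_mem' := (ℬ (1 : G)).zero_mem
  smul_mem' := fun c _ hx => (ℬ (1 : G)).smul_mem c hx
  mul_mem' := fun {x y} hx hy => by simpa using hmul 1 1 x hx y hy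

theorem simple_pred {A : Type*} [NonUnitalRing A] (h : ∀ J : TwoSidedIdeal A, J = ⊥ ∨ J = ⊤)
    (P : A → Prop) (h0 : P 0) (hadd : ∀ x y, P x → P y → P (x + y)) (hneg : ∀ x, P x → P (-x))
    (hl : ∀ x y, P y → P (x * y)) (hr : ∀ x y, P x → P (x * y)) :
    (∀ x, P x → x = 0) ∨ ∀ x, P x := by
  let J : TwoSidedIdeal A := TwoSidedIdeal.mk' {x | P x} h0 (fun {x y} => hadd x y)
    (fun {x} => hneg x) (fun {x y} => hl x y) (fun {x y} => hr x y)
  have hJ : ∀ x, x ∈ J ↔ P x := fun x => TwoSidedIdeal.mem_mk' ..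
  rcases h J with h | h
  · left; intro x hx
    rw [← hJ, h] at hx
    exact (TwoSidedIdeal.mem_bot A).1 hx
  · right; intro x
    rw [← hJ, h]; trivial


theorem lann {A : Type*} [NonUnitalRing A] (h : ∀ J : TwoSidedIdeal A, J = ⊥ ∨ J = ⊤)
    (h2 : ∃ x y : A, x * y ≠ 0)
    (y : A) (hy : ∀ a, y * a = 0) : y = 0 := by
  rcases simple_pred h (fun y => ∀ a, y * a = 0) (by simp)
    (fun x y hx hy a => by simp [add_mul, hx, hy]) (fun x hx a => by simp [hx])
    (fun x y hy a => by simp [mul_assoc, hy]) (fun x y hx a => by simp [mul_assoc, hx]) with h | h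
  · exact h y hy
  · obtain ⟨x, y, hxy⟩ := h2
    exact absurd (h x y) hxy

theorem rann {A : Type*} [NonUnitalRing A] (h : ∀ J : TwoSidedIdeal A, J = ⊥ ∨ J = ⊤)
    (h2 : ∃ x y : A, x * y ≠ 0)
    (y : A) (hy : ∀ a, a * y = 0) : y = 0 := by
  rcases simple_pred h (fun y => ∀ a, a * y = 0) (by simp)
    (fun x y hx hy a => by simp [mul_add, hx, hy]) (fun x hx a => by simp [hx])
    (fun x y hy a => by simp [← mul_assoc, hy]) (fun x y hx a => by simp [← mul_assoc, hx]) with h | h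
  · exact h y hy
  · obtain ⟨x, y, hxy⟩ := h2
    exact absurd (h y x) hxy

theorem prime_of_simple {A : Type*} [NonUnitalRing A] (h : ∀ J : TwoSidedIdeal A, J = ⊥ ∨ J = ⊤)
    (h2 : ∃ x y : A, x * y ≠ 0)
    (y : A) (hy : ∀ a, y * a * y = 0) : y = 0 := by
  rcases simple_pred h (fun b => ∀ a, y * a * b = 0) (by simp)
    (fun x y hx hy a => by simp [mul_add, hx, hy]) (fun x hx a => by simp [hx])
    (fun x z hz a => by rw [← mul_assoc, mul_assoc y]; exact hz _)
    (fun x z hx a => by rw [← mul_assoc, hx, zero_mul]) with h' | h'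
  · exact h' y hy
  · exact lann h h2 y fun a => lann h h2 _ fun b => h' b a

theorem exists_unit {A : Type*} [NonUnitalRing A] (h : ∀ J : TwoSidedIdeal A, J = ⊥ ∨ J = ⊤)
    (h2 : ∃ x y : A, x * y ≠ 0)
    {F : Type*} [Field F] [Module F A] [SMulCommClass F A A] [IsScalarTower F A A]
    [FiniteDimensional F A] : ∃ e : A, ∀ x, e * x = x ∧ x * e = x := by
  have key : ∃ e : A, ∀ x, x * e = x := by
    let e1 : Unitization F A ≃ₗ[F] F × A :=
      { toFun := fun x => (x.fst, x.snd)
        invFun := fun p => Unitization.inl p.1 + Unitization.inr p.2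
        map_add' := fun _ _ => rfl
        map_smul' := fun _ _ => rfl
        left_inv := fun x => by simp [Unitization.inl_fst_add_inr_snd_eq]
        right_inv := fun x => by simp }
    have : Module.Finite F (Unitization F A) := Module.Finite.equiv e1.symm
    have : IsArtinianRing (Unitization F A) := IsArtinianRing.of_finite F _
    set J := Ring.jacobson (Unitization F A) with hJ
    have hJA : ∀ a : A, (a : Unitization F A) ∈ J → a = 0 := by
      rcases simple_pred h (fun a : A => (a : Unitization F A) ∈ J) (by simp)
        (fun x y hx hy => by rw [Unitization.inr_add]; exact J.add_mem hx hy)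
        (fun x hx => by rw [Unitization.inr_neg]; exact J.neg_mem hx)
        (fun x y hy => by rw [Unitization.inr_mul]; exact J.mul_mem_left _ hy)
        (fun x y hy => by rw [Unitization.inr_mul]; exact J.mul_mem_right _ hy) with h' | h'
      · exact h'
      · exfalso
        have hn : IsNilpotent J := by
          exact IsSemiprimaryRing.isNilpotent
        obtain ⟨n, hn⟩ := hn
        have : ∀ n : ℕ, ∃ a : A, a ≠ 0 ∧ (a : Unitization F A) ∈ J ^ n := by
          intro n
          induction n with
          | zero =>
            obtain ⟨x, y, hxy⟩ := h2
            exact ⟨_, hxy, by rw [Submodule.pow_zero, Ideal.one_eq_top]; trivial⟩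
          | succ n ih =>
            obtain ⟨a, ha, ham⟩ := ih
            have : ∃ b, b * a ≠ 0 := by
              by_contra! hc
              exact ha (rann h h2 a hc)
            obtain ⟨b, hb⟩ := this
            refine ⟨_, hb, ?_⟩
            rw [Ideal.IsTwoSided.pow_succ, Unitization.inr_mul]
            exact Ideal.mul_mem_mul (h' b) ham
        obtain ⟨a, ha, ham⟩ := this n
        rw [hn] at ham
        have ham0 : (a : Unitization F A) = 0 := by simpa using ham
        exact ha (Unitization.inr_injective (R := F) (by simpa using ham0))
    let π : Unitization F A →+* (Unitization F A ⧸ J) := Ideal.Quotient.mk J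
    have hπ : Function.Surjective π := Ideal.Quotient.mk_surjective
    let I : Ideal (Unitization F A ⧸ J) :=
      { carrier := {s | ∃ a : A, π a = s}
        zero_mem' := ⟨0, by simp⟩
        add_mem' := by
          rintro _ _ ⟨a, rfl⟩ ⟨b, rfl⟩
          exact ⟨a + b, by simp⟩
        smul_mem' := by
          rintro s _ ⟨a, rfl⟩
          obtain ⟨t, rfl⟩ := hπ s
          refine ⟨t.fst • a + t.snd * a, ?_⟩
          rw [smul_eq_mul, ← map_mul]
          congr 1
          ext <;> simp }
    have : IsSemisimpleRing (Unitization F A ⧸ J) := inferInstance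
    obtain ⟨B, hB⟩ := exists_isCompl I
    have h1 : (1 : Unitization F A ⧸ J) ∈ I ⊔ B := by rw [hB.sup_eq_top]; trivial
    obtain ⟨u, ⟨e, rfl⟩, f, hf, huf⟩ := Submodule.mem_sup.1 h1
    refine ⟨e, fun x => ?_⟩
    have hd : π (x : Unitization F A) - π x * π e = π x * f := by
      rw [sub_eq_iff_eq_add, ← mul_add, add_comm f, huf, mul_one]
    have h3 : π ((x - x * e : A) : Unitization F A) = π x * f := by
      rw [← hd]; simp
    have h4 : π ((x - x * e : A) : Unitization F A) = 0 := by
      have : π ((x - x * e : A) : Unitization F A) ∈ I ⊓ B :=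
        ⟨⟨_, rfl⟩, by rw [h3]; exact B.mul_mem_left _ hf⟩
      rw [hB.inf_eq_bot] at this
      simpa using this
    have := hJA _ (Ideal.Quotient.eq_zero_iff_mem.1 h4)
    exact (sub_eq_zero.1 this).symm
  obtain ⟨e, he⟩ := key
  refine ⟨e, fun x => ⟨?_, he x⟩⟩
  have : x - e * x = 0 := rann h h2 _ fun a => by
    rw [mul_sub, ← mul_assoc, he, sub_self]
  exact (sub_eq_zero.1 this).symm

theorem exists_mat {A : Type*} [NonUnitalRing A] (h : ∀ J : TwoSidedIdeal A, J = ⊥ ∨ J = ⊤)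
    (h2 : ∃ x y : A, x * y ≠ 0)
    {F : Type*} [Field F] [IsAlgClosed F] [Module F A] [SMulCommClass F A A]
    [IsScalarTower F A A]
    [FiniteDimensional F A] :
    ∃ k : ℕ, ∃ e : A ≃+* Matrix (Fin k) (Fin k) F, ∀ (c : F) (x : A), e (c • x) = c • e x := by
  obtain ⟨e, he⟩ := exists_unit h h2 (F := F)
  let : Ring A := { (inferInstance : NonUnitalRing A) with
    one := e
    one_mul := fun x => (he x).1
    mul_one := fun x => (he x).2 }
  let : Algebra F A := Algebra.ofModule (fun r x y => smul_mul_assoc r x y)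
    (fun r x y => mul_smul_comm r x y)
  have : Nontrivial A := by
    obtain ⟨x, y, hxy⟩ := h2
    exact ⟨⟨_, _, hxy⟩⟩
  have : IsSimpleRing A := by
    refine ⟨?_⟩
    exact { exists_pair_ne := ⟨⊥, ⊤, bot_ne_top⟩, eq_bot_or_eq_top := h }
  obtain ⟨k, _, ⟨f⟩⟩ := IsSimpleRing.exists_algEquiv_matrix_of_isAlgClosed F A
  exact ⟨k, f.toRingEquiv, fun c x => map_smul f c x⟩

section graded
set_option linter.unusedSectionVars false
variable {G : Type*} [Group G] [DecidableEq G] {F : Type*} [Field F]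
    {R : Type*} [NonUnitalRing R] [Module F R] [SMulCommClass F R R] [IsScalarTower F R R]
    (ℬ : G → Submodule F R) [DirectSum.Decomposition ℬ]
    (hmul : ∀ g h : G, ∀ x ∈ ℬ g, ∀ y ∈ ℬ h, x * y ∈ ℬ (g * h))

theorem dec_mul_right (hmul : ∀ g h : G, ∀ x ∈ ℬ g, ∀ y ∈ ℬ h, x * y ∈ ℬ (g * h))
    (x : R) (g c : G) (s : R) (hs : s ∈ ℬ c) :
    (DirectSum.decompose ℬ (x * s) (g * c) : R) = DirectSum.decompose ℬ x g * s := by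
  induction x using DirectSum.Decomposition.inductionOn ℬ with
  | zero => simp
  | @homogeneous i m =>
    by_cases h : i = g
    · subst h
      rw [DirectSum.decompose_of_mem_same ℬ m.2,
        DirectSum.decompose_of_mem_same ℬ (hmul _ _ _ m.2 _ hs)]
    · rw [DirectSum.decompose_of_mem_ne ℬ m.2 h,
        DirectSum.decompose_of_mem_ne ℬ (hmul _ _ _ m.2 _ hs) (by simpa using h), zero_mul]
  | add m m' h h' => simp [add_mul, DirectSum.decompose_add, h, h']

theorem dec_mul_left (hmul : ∀ g h : G, ∀ x ∈ ℬ g, ∀ y ∈ ℬ h, x * y ∈ ℬ (g * h))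
    (x : R) (g c : G) (s : R) (hs : s ∈ ℬ c) :
    (DirectSum.decompose ℬ (s * x) (c * g) : R) = s * DirectSum.decompose ℬ x g := by
  induction x using DirectSum.Decomposition.inductionOn ℬ with
  | zero => simp
  | @homogeneous i m =>
    by_cases h : i = g
    · subst h
      rw [DirectSum.decompose_of_mem_same ℬ m.2,
        DirectSum.decompose_of_mem_same ℬ (hmul _ _ _ hs _ m.2)]
    · rw [DirectSum.decompose_of_mem_ne ℬ m.2 h,
        DirectSum.decompose_of_mem_ne ℬ (hmul _ _ _ hs _ m.2) (by simpa using h), mul_zero]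
  | add m m' h h' => simp [mul_add, DirectSum.decompose_add, h, h']

/-- If all homogeneous two-sided multiples of `x` have zero identity part, then all do. -/
theorem homog_red (x : R)
    (hx : ∀ a c : G, ∀ r ∈ ℬ a, ∀ s ∈ ℬ c, (DirectSum.decompose ℬ (r * x * s) 1 : R) = 0)
    (r s : R) : (DirectSum.decompose ℬ (r * x * s) 1 : R) = 0 := by
  induction r using DirectSum.Decomposition.inductionOn ℬ with
  | zero => simp
  | @homogeneous i m =>
    induction s using DirectSum.Decomposition.inductionOn ℬ with
    | zero => simp
    | @homogeneous j m' => exact hx _ _ _ m.2 _ m'.2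
    | add m m' h h' => rw [mul_add, DirectSum.decompose_add, DirectSum.add_apply, Submodule.coe_add, h, h', add_zero]
  | add m m' h h' => rw [add_mul, add_mul, DirectSum.decompose_add, DirectSum.add_apply, Submodule.coe_add, h, h', add_zero]

theorem graded_prime (hmul : ∀ g h : G, ∀ x ∈ ℬ g, ∀ y ∈ ℬ h, x * y ∈ ℬ (g * h))
    (hsimple : ∀ J : TwoSidedIdeal R,
      (∀ x ∈ J, ∀ g : G, ((DirectSum.decompose ℬ x) g : R) ∈ J) → J = ⊥ ∨ J = ⊤)
    (e : R) (he : e ∈ ℬ 1) (he0 : e ≠ 0) (hee : e * e = e)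
    (g : G) (x : R) (hx : x ∈ ℬ g) (hx0 : x ≠ 0) :
    ∃ a c : G, a * g * c = 1 ∧ ∃ r ∈ ℬ a, ∃ s ∈ ℬ c, r * x * s ≠ 0 := by
  by_contra! hcon
  let P : R → Prop := fun b => ∀ r s, (DirectSum.decompose ℬ (r * b * s) 1 : R) = 0
  let J : TwoSidedIdeal R := TwoSidedIdeal.mk' {b | P b} (by intro r s; simp)
    (by
      intro x y hx hy r s
      rw [mul_add, add_mul, DirectSum.decompose_add, DirectSum.add_apply, Submodule.coe_add,
        hx, hy, add_zero])
    (by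
      intro x hx r s
      have := hx (-r) s
      simpa using this)
    (by
      intro x y hy r s
      have := hy (r * x) s
      simpa [mul_assoc] using this)
    (by
      intro x y hx r s
      have := hx r (y * s)
      simpa [mul_assoc] using this)
  have hJ : ∀ b, b ∈ J ↔ P b := fun b => TwoSidedIdeal.mem_mk' ..
  have hg : ∀ x ∈ J, ∀ g : G, ((DirectSum.decompose ℬ x) g : R) ∈ J := by
    intro b hb g
    rw [hJ] at hb ⊢
    intro r s
    refine homog_red ℬ _ ?_ r s
    intro a c r hr s hs
    by_cases h1 : a * g * c = 1
    · have h2 := hb r s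
      rw [← h1, dec_mul_right ℬ hmul _ _ _ _ hs, dec_mul_left ℬ hmul _ _ _ _ hr] at h2
      rw [h2]; simp
    · exact DirectSum.decompose_of_mem_ne ℬ
        (hmul _ _ _ (hmul _ _ _ hr _ (SetLike.coe_mem _)) _ hs) h1
  have hxJ : x ∈ J := by
    rw [hJ]
    intro r s
    refine homog_red ℬ _ ?_ r s
    intro a c r hr s hs
    by_cases h1 : a * g * c = 1
    · rw [hcon a c h1 r hr s hs]; simp
    · exact DirectSum.decompose_of_mem_ne ℬ (hmul _ _ _ (hmul _ _ _ hr _ hx) _ hs) h1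
  rcases hsimple J hg with h | h
  · rw [h] at hxJ
    exact hx0 ((TwoSidedIdeal.mem_bot R).1 hxJ)
  · have : e ∈ J := by rw [h]; trivial
    rw [hJ] at this
    have := this e e
    rw [hee, hee, DirectSum.decompose_of_mem_same ℬ he] at this
    exact he0 this
end graded

/-- Multiplication `A ⊗ C → R` is bijective when `A` is a matrix subalgebra containing the unit. -/
theorem bij_of_matrix {F : Type*} [Field F]
    {R : Type*} [NonUnitalRing R] [Module F R] [SMulCommClass F R R] [IsScalarTower F R R]
    (A : NonUnitalSubalgebra F R) (k : ℕ) (ε : A ≃+* Matrix (Fin k) (Fin k) F)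
    (hε : ∀ (c : F) (x : A), ε (c • x) = c • ε x)
    (u : R) (huA : u ∈ A) (hu : ∀ x : R, u * x = x ∧ x * u = x) :
    Function.Bijective
        (TensorProduct.lift ((LinearMap.mul F R).compl₁₂
          A.toSubmodule.subtype
          (NonUnitalSubalgebra.centralizer F (A : Set R)).toSubmodule.subtype)) := by
  classical
  let E : Fin k → Fin k → A := fun i j => ε.symm (Matrix.single i j 1)
  have hE : ∀ i j p q, ((E i j : R)) * (E p q : R) = if j = p then (E i q : R) else 0 := by
    intro i j p q
    rw [← NonUnitalSubalgebra.coe_mul]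
    have : E i j * E p q = if j = p then E i q else 0 := by
      apply ε.injective
      by_cases h : j = p
      · subst h; simp [E]
      · simp [E, h]
    rw [this]; split_ifs <;> rfl
  have hsum : ∑ i, (E i i : R) = u := by
    have h1 : ε ⟨u, huA⟩ = 1 := by
      have : ∀ M, ε ⟨u, huA⟩ * M = M := by
        intro M
        obtain ⟨a, rfl⟩ := ε.surjective M
        rw [← map_mul]
        congr 1
        exact Subtype.ext (hu a).1
      simpa using this 1
    have h2 : ∑ i, E i i = ⟨u, huA⟩ := by
      apply ε.injective
      rw [h1, map_sum]
      simp [E, Matrix.sum_single_one]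
    have := congrArg (Subtype.val) h2
    rw [AddSubmonoidClass.coe_finsetSum] at this
    exact this
  have hexp : ∀ a : A, a = ∑ p, ∑ q, ε a p q • E p q := by
    intro a
    apply ε.injective
    rw [map_sum]
    simp_rw [map_sum, hε]
    conv_lhs => rw [Matrix.matrix_eq_sum_single (ε a)]
    simp [E]
  have hexp' : ∀ a : A, (a : R) = ∑ p, ∑ q, ε a p q • (E p q : R) := by
    intro a
    conv_lhs => rw [hexp a]
    simp [AddSubmonoidClass.coe_finsetSum]
  let c : Fin k → Fin k → R → R := fun i j r => ∑ l, (E l i : R) * r * (E j l : R)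
  have hcE : ∀ i j r p q, (E p q : R) * c i j r = c i j r * E p q := by
    intro i j r p q
    simp only [c, Finset.mul_sum, Finset.sum_mul]
    have h1 : ∀ l, (E p q : R) * ((E l i : R) * r * (E j l : R))
        = if q = l then (E p i : R) * r * E j l else 0 := by
      intro l
      rw [← mul_assoc, ← mul_assoc, hE]
      split_ifs <;> simp
    have h2 : ∀ l, ((E l i : R) * r * (E j l : R)) * E p q
        = if l = p then (E l i : R) * r * E j q else 0 := by
      intro l
      rw [mul_assoc, hE]
      split_ifs <;> simp
    simp [h1, h2]
  have hcC : ∀ i j r, c i j r ∈ (NonUnitalSubalgebra.centralizer F (A : Set R)).toSubmodule := by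
    intro i j r
    show c i j r ∈ NonUnitalSubalgebra.centralizer F (A : Set R)
    rw [NonUnitalSubalgebra.mem_centralizer_iff]
    intro a ha
    have := hexp' ⟨a, ha⟩
    simp only at this
    rw [this]
    simp only [Finset.sum_mul, Finset.mul_sum, smul_mul_assoc, mul_smul_comm, hcE]
  let inv : R → TensorProduct F A.toSubmodule
      (NonUnitalSubalgebra.centralizer F (A : Set R)).toSubmodule :=
    fun r => ∑ i, ∑ j, TensorProduct.tmul F (E i j : A.toSubmodule) ⟨c i j r, hcC i j r⟩
  have hcadd : ∀ i j r s, c i j (r + s) = c i j r + c i j s := by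
    intro i j r s
    simp [c, mul_add, add_mul, Finset.sum_add_distrib]
  have inv_add : ∀ r s, inv (r + s) = inv r + inv s := by
    intro r s
    simp only [inv, ← Finset.sum_add_distrib, ← TensorProduct.tmul_add]
    refine Finset.sum_congr rfl fun i _ => Finset.sum_congr rfl fun j _ => ?_
    congr 1
    exact Subtype.ext (hcadd i j r s)
  have inv_zero : inv 0 = 0 := by
    have := inv_add 0 0
    simpa using this
  refine Function.bijective_iff_has_inverse.2 ⟨inv, ?_, ?_⟩
  · intro t
    induction t using TensorProduct.induction_on with
    | zero => rw [map_zero, inv_zero]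
    | add x y hx hy => rw [map_add, inv_add, hx, hy]
    | tmul a d =>
      obtain ⟨a, ha⟩ := a
      have hd : ∀ x ∈ (A : Set R), x * (d : R) = (d : R) * x :=
        NonUnitalSubalgebra.mem_centralizer_iff F |>.1 d.2
      simp only [TensorProduct.lift.tmul, LinearMap.compl₁₂_apply, Submodule.subtype_apply,
        LinearMap.mul_apply']
      have hc : ∀ i j, (⟨c i j (a * d), hcC i j _⟩ :
          (NonUnitalSubalgebra.centralizer F (A : Set R)).toSubmodule) = ε ⟨a, ha⟩ i j • d := by
        intro i j
        apply Subtype.ext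
        show c i j (a * d) = ε ⟨a, ha⟩ i j • (d : R)
        have h1 : ∀ l, (E l i : R) * (a * d) * (E j l : R)
            = ε ⟨a, ha⟩ i j • (E l l * (d : R)) := by
          intro l
          rw [mul_assoc, mul_assoc, ← hd _ (E j l).2, ← mul_assoc, ← mul_assoc]
          have h3 : (E l i : R) * a * (E j l : R) = ε ⟨a, ha⟩ i j • (E l l : R) := by
            have := hexp' ⟨a, ha⟩
            simp only at this
            conv_lhs => rw [this]
            simp only [Finset.sum_mul, Finset.mul_sum, smul_mul_assoc, mul_smul_comm, hE]
            simp [ite_mul, hE]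
          rw [h3, smul_mul_assoc]
        simp only [c, h1]
        rw [← Finset.smul_sum, ← Finset.sum_mul, hsum, (hu _).1]
      simp only [inv, hc]
      simp only [TensorProduct.tmul_smul, TensorProduct.smul_tmul', ← TensorProduct.sum_tmul]
      congr 1
      exact (hexp ⟨a, ha⟩).symm
  · intro r
    simp only [inv, map_sum, TensorProduct.lift.tmul, LinearMap.compl₁₂_apply,
      Submodule.subtype_apply, LinearMap.mul_apply']
    have h1 : ∀ i j, (E i j : R) * c i j r = (E i i : R) * r * (E j j : R) := by
      intro i j
      rw [hcE]
      simp only [c, Finset.sum_mul, mul_assoc, hE]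
      simp
    simp only [h1]
    simp only [← Finset.mul_sum, ← Finset.sum_mul, hsum, (hu _).1, (hu _).2]

/-- If `R` is a finite-dimensional graded simple algebra over an algebraically closed
field whose identity component `A = R_e` is simple, then `A ≅ M_k(F)`, the centralizer
`C` of `A` in `R` is a graded subalgebra with `dim C_e = 1` which is a graded division
algebra, and multiplication gives an isomorphism `A ⊗ C ≅ R` (so `R = AC`). -/
theorem stmt_11 {G : Type*} [Group G] [DecidableEq G] {F : Type*} [Field F] [IsAlgClosed F]
    {R : Type*} [NonUnitalRing R] [Module F R] [SMulCommClass F R R] [IsScalarTower F R R]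
    [FiniteDimensional F R]
    (ℬ : G → Submodule F R) [DirectSum.Decomposition ℬ]
    (hmul : ∀ g h : G, ∀ x ∈ ℬ g, ∀ y ∈ ℬ h, x * y ∈ ℬ (g * h))
    -- `R` is graded simple:
    (hR2 : ∃ x y : R, x * y ≠ 0)
    (hsimple : ∀ J : TwoSidedIdeal R,
      (∀ x ∈ J, ∀ g : G, ((DirectSum.decompose ℬ x) g : R) ∈ J) → J = ⊥ ∨ J = ⊤)
    -- `A = R_e` is a simple algebra:
    (hA2 : ∃ x y : identityComponent ℬ hmul, x * y ≠ 0)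
    (hAsimple : ∀ J : TwoSidedIdeal (identityComponent ℬ hmul), J = ⊥ ∨ J = ⊤) :
    -- `A ≅ M_k(F)` (an `F`-linear ring isomorphism):
    (∃ k : ℕ, ∃ e : identityComponent ℬ hmul ≃+* Matrix (Fin k) (Fin k) F,
        ∀ (c : F) (x : identityComponent ℬ hmul), e (c • x) = c • e x) ∧
      -- the centralizer `C` of `A` in `R` is a graded subspace:
      (∀ x ∈ NonUnitalSubalgebra.centralizer F ((identityComponent ℬ hmul : Set R)),
        ∀ g : G, ((DirectSum.decompose ℬ x) g : R) ∈
          NonUnitalSubalgebra.centralizer F ((identityComponent ℬ hmul : Set R))) ∧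
      -- `dim C_e = 1`:
      Module.finrank F
        (↥((NonUnitalSubalgebra.centralizer F
          ((identityComponent ℬ hmul : Set R))).toSubmodule ⊓ ℬ (1 : G))) = 1 ∧
      -- `C` is a graded division algebra:
      (∃ u ∈ NonUnitalSubalgebra.centralizer F ((identityComponent ℬ hmul : Set R)),
        (∀ x : R, u * x = x ∧ x * u = x) ∧
        ∀ g : G, ∀ x ∈ NonUnitalSubalgebra.centralizer F
            ((identityComponent ℬ hmul : Set R)), x ∈ ℬ g → x ≠ 0 →
          ∃ y ∈ NonUnitalSubalgebra.centralizer F ((identityComponent ℬ hmul : Set R)),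
            x * y = u ∧ y * x = u) ∧
      -- multiplication `A ⊗ C → R` is bijective, i.e. `R = AC ≅ A ⊗ C`:
      Function.Bijective
        (TensorProduct.lift ((LinearMap.mul F R).compl₁₂
          (identityComponent ℬ hmul).toSubmodule.subtype
          (NonUnitalSubalgebra.centralizer F
            ((identityComponent ℬ hmul : Set R))).toSubmodule.subtype)) := by
  set A := identityComponent ℬ hmul with hAdef
  have hAmem : ∀ x, x ∈ A ↔ x ∈ ℬ 1 := fun x => Iff.rfl
  have hfin : FiniteDimensional F A :=
    FiniteDimensional.finiteDimensional_submodule A.toSubmodule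
  obtain ⟨⟨e, heA⟩, he⟩ := exists_unit hAsimple hA2 (F := F)
  have heB : e ∈ ℬ 1 := heA
  have hel : ∀ x ∈ ℬ 1, e * x = x := fun x hx => congrArg Subtype.val (he ⟨x, hx⟩).1
  have her : ∀ x ∈ ℬ 1, x * e = x := fun x hx => congrArg Subtype.val (he ⟨x, hx⟩).2
  have he0 : e ≠ 0 := by
    rintro rfl
    obtain ⟨x, y, hxy⟩ := hA2
    apply hxy
    have := hel x x.2
    rw [zero_mul] at this
    apply Subtype.ext
    show (x : R) * y = 0
    rw [← this, zero_mul]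
  have hprime : ∀ y ∈ ℬ 1, (∀ a ∈ ℬ 1, y * a * y = 0) → y = 0 := by
    intro y hy h
    have := prime_of_simple hAsimple hA2 ⟨y, hy⟩ fun a => Subtype.ext (h a a.2)
    exact congrArg Subtype.val this
  have hgp := graded_prime ℬ hmul hsimple e heB he0 (hel e heB)
  have hmul' : ∀ {a b c : G} {x y : R}, x ∈ ℬ a → y ∈ ℬ b → a * b = c → x * y ∈ ℬ c := by
    intro a b c x y hx hy h
    rw [← h]; exact hmul _ _ _ hx _ hy
  -- `e` is the unit of `R`, first on homogeneous elements
  have hl1 : ∀ g : G, ∀ x ∈ ℬ g, e * x = x := by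
    intro g x hx
    by_contra hne
    have hy : e * x - x ∈ ℬ g := (ℬ g).sub_mem (hmul' heB hx (one_mul g)) hx
    have hey : e * (e * x - x) = 0 := by rw [mul_sub, ← mul_assoc, hel e heB, sub_self]
    obtain ⟨a, c, hac, r, hr, s, hs, hne'⟩ := hgp g _ hy (sub_ne_zero.2 hne)
    set y := e * x - x
    refine hne' (hprime _ (hmul' (hmul' hr hy rfl) hs hac) fun b hb => ?_)
    have h1 : (y * s) * b * r = 0 := by
      have hm : (y * s) * b * r ∈ ℬ 1 := by
        refine hmul' (hmul' (hmul' hy hs rfl) hb rfl) hr ?_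
        have : g * c = a⁻¹ := by rw [eq_inv_iff_mul_eq_one, ← mul_eq_one_comm]; simpa [mul_assoc] using hac
        simp [this]
      rw [← hel _ hm]
      simp only [← mul_assoc, hey, zero_mul]
    calc r * y * s * b * (r * y * s) = r * ((y * s) * b * r) * (y * s) := by
          simp only [mul_assoc]
      _ = 0 := by rw [h1]; simp
  have hr1 : ∀ g : G, ∀ x ∈ ℬ g, x * e = x := by
    intro g x hx
    by_contra hne
    have hy : x * e - x ∈ ℬ g := (ℬ g).sub_mem (hmul' hx heB (mul_one g)) hx
    have hey : (x * e - x) * e = 0 := by rw [sub_mul, mul_assoc, hel e heB, sub_self]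
    obtain ⟨a, c, hac, r, hr, s, hs, hne'⟩ := hgp g _ hy (sub_ne_zero.2 hne)
    set y := x * e - x
    refine hne' (hprime _ (hmul' (hmul' hr hy rfl) hs hac) fun b hb => ?_)
    have h1 : s * b * (r * y) = 0 := by
      have hm : s * b * (r * y) ∈ ℬ 1 := by
        refine hmul' (hmul' hs hb rfl) (hmul' hr hy rfl) ?_
        have : c = (a * g)⁻¹ := eq_inv_of_mul_eq_one_right hac
        simp [this]
      rw [← her _ hm]
      simp only [mul_assoc, hey, mul_zero]
    calc r * y * s * b * (r * y * s) = r * y * (s * b * (r * y)) * s := by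
          simp only [mul_assoc]
      _ = 0 := by rw [h1]; simp
  have hu : ∀ x : R, e * x = x ∧ x * e = x := by
    intro x
    induction x using DirectSum.Decomposition.inductionOn ℬ with
    | zero => simp
    | @homogeneous i m => exact ⟨hl1 _ _ m.2, hr1 _ _ m.2⟩
    | add m m' h h' => exact ⟨by rw [mul_add, h.1, h'.1], by rw [add_mul, h.2, h'.2]⟩
  have hC : ∀ x, x ∈ NonUnitalSubalgebra.centralizer F (A : Set R) ↔
      ∀ a ∈ ℬ 1, a * x = x * a := fun x => NonUnitalSubalgebra.mem_centralizer_iff F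
  have heC : e ∈ NonUnitalSubalgebra.centralizer F (A : Set R) := by
    rw [hC]; intro a _; rw [(hu a).1, (hu a).2]
  obtain ⟨k, ε, hε⟩ := exists_mat hAsimple hA2 (F := F)
  refine ⟨⟨k, ε, hε⟩, ?_, ?_, ⟨e, heC, hu, ?_⟩, bij_of_matrix A k ε hε e heA hu⟩
  · intro x hx g
    rw [hC] at hx ⊢
    intro a ha
    have h1 := dec_mul_left ℬ hmul x g 1 a ha
    have h2 := dec_mul_right ℬ hmul x g 1 a ha
    rw [one_mul] at h1
    rw [mul_one] at h2
    rw [← h1, ← h2, hx a ha]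
  · refine finrank_eq_one_iff'.2 ⟨⟨e, heC, heB⟩, ?_, ?_⟩
    · intro h; exact he0 (congrArg Subtype.val h)
    · rintro ⟨w, hwC, hw⟩
      have hwC' := (hC w).1 hwC
      have hs : ε ⟨w, hw⟩ ∈ Set.range (Matrix.scalar (Fin k)) := by
        apply Matrix.mem_range_scalar_of_commute_single
        intro i j _
        obtain ⟨a, ha⟩ := ε.surjective (Matrix.single i j 1)
        rw [← ha]
        show ε a * ε ⟨w, hw⟩ = ε ⟨w, hw⟩ * ε a
        rw [← map_mul, ← map_mul]
        congr 1
        exact Subtype.ext (hwC' a a.2)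
      obtain ⟨c, hc⟩ := hs
      refine ⟨c, Subtype.ext ?_⟩
      show c • e = w
      have h1 : ε ⟨e, heA⟩ = 1 := by
        have : ∀ M, ε ⟨e, heA⟩ * M = M := by
          intro M
          obtain ⟨a, rfl⟩ := ε.surjective M
          rw [← map_mul, (he a).1]
        simpa using this 1
      have h2 : c • (⟨e, heA⟩ : A) = ⟨w, hw⟩ := by
        apply ε.injective
        rw [hε, h1, ← hc, Matrix.scalar_apply, Matrix.smul_one_eq_diagonal]
      exact congrArg Subtype.val h2
  · intro g x hxC hx hx0
    rw [hC] at hxC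
    obtain ⟨a, c, hac, r, hr, s, hs, hne⟩ := hgp g x hx hx0
    have hc : c = (a * g)⁻¹ := eq_inv_of_mul_eq_one_right hac
    have hmem := hmul' (hmul' hr hx rfl) hs hac
    -- right inverse
    have hright : ∃ y ∈ ℬ g⁻¹, x * y = e := by
      rcases simple_pred hAsimple (fun b : A => ∃ y ∈ ℬ g⁻¹, x * y = b)
        ⟨0, zero_mem _, by simp⟩
        (by
          rintro b b' ⟨y, hy, h⟩ ⟨y', hy', h'⟩
          exact ⟨y + y', add_mem hy hy', by rw [mul_add, h, h']; rfl⟩)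
        (by
          rintro b ⟨y, hy, h⟩
          exact ⟨-y, neg_mem hy, by rw [mul_neg, h]; rfl⟩)
        (by
          rintro b b' ⟨y, hy, h⟩
          refine ⟨b * y, hmul' b.2 hy (one_mul _), ?_⟩
          rw [← mul_assoc, ← hxC _ b.2, mul_assoc, h]; rfl)
        (by
          rintro b b' ⟨y, hy, h⟩
          refine ⟨y * b', hmul' hy b'.2 (mul_one _), ?_⟩
          rw [← mul_assoc, h]; rfl) with h | h
      · exfalso
        apply hne
        apply hprime _ hmem
        intro b hb
        have hm : s * b * r ∈ ℬ g⁻¹ := hmul' (hmul' hs hb rfl) hr (by simp [hc])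
        have h3 : x * (s * b * r) = 0 := congrArg Subtype.val
          (h ⟨x * (s * b * r), hmul' hx hm (by simp)⟩ ⟨_, hm, rfl⟩)
        calc r * x * s * b * (r * x * s) = r * (x * (s * b * r)) * (x * s) := by
              simp only [mul_assoc]
          _ = 0 := by rw [h3]; simp
      · exact h ⟨e, heA⟩
    have hleft : ∃ y ∈ ℬ g⁻¹, y * x = e := by
      rcases simple_pred hAsimple (fun b : A => ∃ y ∈ ℬ g⁻¹, y * x = b)
        ⟨0, zero_mem _, by simp⟩
        (by
          rintro b b' ⟨y, hy, h⟩ ⟨y', hy', h'⟩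
          exact ⟨y + y', add_mem hy hy', by rw [add_mul, h, h']; rfl⟩)
        (by
          rintro b ⟨y, hy, h⟩
          exact ⟨-y, neg_mem hy, by rw [neg_mul, h]; rfl⟩)
        (by
          rintro b b' ⟨y, hy, h⟩
          refine ⟨b * y, hmul' b.2 hy (one_mul _), ?_⟩
          rw [mul_assoc, h]; rfl)
        (by
          rintro b b' ⟨y, hy, h⟩
          refine ⟨y * b', hmul' hy b'.2 (mul_one _), ?_⟩
          rw [mul_assoc, hxC _ b'.2, ← mul_assoc, h]; rfl) with h | h
      · exfalso
        apply hne
        apply hprime _ hmem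
        intro b hb
        have hm : s * b * r ∈ ℬ g⁻¹ := hmul' (hmul' hs hb rfl) hr (by simp [hc])
        have h3 : (s * b * r) * x = 0 := congrArg Subtype.val
          (h ⟨(s * b * r) * x, hmul' hm hx (by simp)⟩ ⟨_, hm, rfl⟩)
        calc r * x * s * b * (r * x * s) = r * x * ((s * b * r) * x) * s := by
              simp only [mul_assoc]
          _ = 0 := by rw [h3]; simp
      · exact h ⟨e, heA⟩
    obtain ⟨y, hy, hxy⟩ := hright
    obtain ⟨z, hz, hzx⟩ := hleft
    have hzy : z = y := by
      rw [← (hu z).2, ← hxy, ← mul_assoc, hzx, (hu y).1]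
    subst hzy
    refine ⟨z, ?_, hxy, hzx⟩
    rw [hC]
    intro a ha
    calc a * z = (z * x) * a * z := by rw [hzx, (hu a).1]
      _ = z * (x * a) * z := by simp only [mul_assoc]
      _ = z * (a * x) * z := by rw [hxC a ha]
      _ = z * a * (x * z) := by simp only [mul_assoc]
      _ = z * a := by rw [hxy, (hu _).2]
end

section
/- Let R be a finite-dimensional graded simple algebra over an algebraically closed field F such that char F = 0 or char F is coprime to the order of every finite subgroup of G. Then R is semiprimitive, i.e., its Jacobson radical is zero. -/
set_option linter.unusedSectionVars false

namespace GradedSimple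

open DirectSum

section
variable {G : Type*} [Group G] [DecidableEq G] {F : Type*} [Field F]
    {R : Type*} [NonUnitalRing R] [Module F R] [SMulCommClass F R R] [IsScalarTower F R R]
    (ℬ : G → Submodule F R) [DirectSum.Decomposition ℬ]

theorem comp_mul_right (hmul : ∀ g h : G, ∀ x ∈ ℬ g, ∀ y ∈ ℬ h, x * y ∈ ℬ (g * h))
    {h : G} {y : R} (hy : y ∈ ℬ h) (x : R) (g : G) :
    (decompose ℬ (x * y) (g * h) : R) = (decompose ℬ x g : R) * y := by
  induction x using DirectSum.Decomposition.inductionOn ℬ with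
  | zero => simp
  | @homogeneous k m =>
    by_cases hk : k = g
    · subst hk
      rw [decompose_of_mem_same ℬ (hmul _ _ _ m.2 _ hy), decompose_of_mem_same ℬ m.2]
    · rw [decompose_of_mem_ne ℬ (hmul _ _ _ m.2 _ hy) (by simpa using hk),
        decompose_of_mem_ne ℬ m.2 hk, zero_mul]
  | add a b ha hb => simp [add_mul, decompose_add, ha, hb]

theorem comp_mul_left (hmul : ∀ g h : G, ∀ x ∈ ℬ g, ∀ y ∈ ℬ h, x * y ∈ ℬ (g * h))
    {h : G} {x : R} (hx : x ∈ ℬ h) (y : R) (g : G) :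
    (decompose ℬ (x * y) (h * g) : R) = x * (decompose ℬ y g : R) := by
  induction y using DirectSum.Decomposition.inductionOn ℬ with
  | zero => simp
  | @homogeneous k m =>
    by_cases hk : k = g
    · subst hk
      rw [decompose_of_mem_same ℬ (hmul _ _ _ hx _ m.2), decompose_of_mem_same ℬ m.2]
    · rw [decompose_of_mem_ne ℬ (hmul _ _ _ hx _ m.2) (by simpa using hk),
        decompose_of_mem_ne ℬ m.2 hk, mul_zero]
  | add a b ha hb => simp [mul_add, decompose_add, ha, hb]

theorem comp_mul_right_eq (hmul : ∀ g h : G, ∀ x ∈ ℬ g, ∀ y ∈ ℬ h, x * y ∈ ℬ (g * h))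
    {h : G} {y : R} (hy : y ∈ ℬ h) (x : R) (g : G) :
    (decompose ℬ (x * y) g : R) = (decompose ℬ x (g * h⁻¹) : R) * y := by
  rw [← comp_mul_right ℬ hmul hy, inv_mul_cancel_right]

theorem comp_mul_left_eq (hmul : ∀ g h : G, ∀ x ∈ ℬ g, ∀ y ∈ ℬ h, x * y ∈ ℬ (g * h))
    {h : G} {x : R} (hx : x ∈ ℬ h) (y : R) (g : G) :
    (decompose ℬ (x * y) g : R) = x * (decompose ℬ y (h⁻¹ * g) : R) := by
  rw [← comp_mul_left ℬ hmul hx, mul_inv_cancel_left]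

/-- If all homogeneous components are killed by an additive map then so is the element. -/
theorem hom_ext {M : Type*} [AddCommMonoid M] (f : R →+ M)
    (x : R) (h : ∀ g, f (decompose ℬ x g : R) = 0) : f x = 0 := by
  classical
  rw [← sum_support_decompose ℬ x, map_sum]
  exact Finset.sum_eq_zero fun i _ => h i

/-- graded left ideal -/
structure GLI (V : Submodule F R) : Prop where
  mul : ∀ r : R, ∀ v ∈ V, r * v ∈ V
  gr : ∀ v ∈ V, ∀ g, (decompose ℬ v g : R) ∈ V

theorem exists_min [FiniteDimensional F R] [Nontrivial R] : ∃ V : Submodule F R, GLI ℬ V ∧ V ≠ ⊥ ∧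
    ∀ W, GLI ℬ W → W ≤ V → W ≠ ⊥ → W = V := by
  obtain ⟨V, ⟨h1, h2⟩, h3⟩ := (wellFounded_lt (α := Submodule F R)).has_min
    {V | GLI ℬ V ∧ V ≠ ⊥} ⟨⊤, ⟨fun _ _ _ => trivial, fun _ _ _ => trivial⟩, top_ne_bot⟩
  refine ⟨V, h1, h2, fun W hW hle hne => ?_⟩
  by_contra hc
  exact h3 W ⟨hW, hne⟩ (lt_of_le_of_ne hle hc)

theorem sq_ne_zero (hmul : ∀ g h : G, ∀ x ∈ ℬ g, ∀ y ∈ ℬ h, x * y ∈ ℬ (g * h))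
    (hR2 : ∃ x y : R, x * y ≠ 0)
    (hsimple : ∀ J : TwoSidedIdeal R,
      (∀ x ∈ J, ∀ g : G, ((DirectSum.decompose ℬ x) g : R) ∈ J) → J = ⊥ ∨ J = ⊤)
    (V : Submodule F R) (hV : GLI ℬ V) (hV0 : V ≠ ⊥) : ∃ w ∈ V, ∃ v ∈ V, w * v ≠ 0 := by
  by_contra! hc
  obtain ⟨v0, hv0, hv0'⟩ := (Submodule.ne_bot_iff V).1 hV0
  let A : TwoSidedIdeal R := .mk' {x | ∀ v ∈ V, x * v = 0}
    (by simp) (by intro x y hx hy v hv; simp [add_mul, hx v hv, hy v hv])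
    (by intro x hx v hv; simp [hx v hv])
    (by intro x y hy v hv; simp [mul_assoc, hy v hv])
    (by intro x y hx v hv; simp [mul_assoc, hx _ (hV.mul y v hv)])
  have hA : ∀ x, x ∈ A ↔ ∀ v ∈ V, x * v = 0 := by
    intro x; simp [A]
  let B : TwoSidedIdeal R := .mk' {x | ∀ r : R, r * x = 0}
    (by simp) (by intro x y hx hy v; simp [mul_add, hx v, hy v])
    (by intro x hx v; simp [hx v])
    (by intro x y hy v; rw [← mul_assoc]; exact hy _)
    (by intro x y hx v; rw [← mul_assoc, hx v, zero_mul])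
  have hB : ∀ x, x ∈ B ↔ ∀ r : R, r * x = 0 := by
    intro x; simp [B]
  rcases hsimple A (by
    intro x hx g
    rw [hA] at hx ⊢
    intro v hv
    refine hom_ext ℬ (AddMonoidHom.mulLeft (decompose ℬ x g : R)) v fun h => ?_
    have := hx _ (hV.gr v hv h)
    rw [AddMonoidHom.coe_mulLeft, ← comp_mul_right ℬ hmul (decompose ℬ v h).2, this]; simp) with h | h
  · have : v0 ∈ A := (hA _).2 fun v hv => hc _ hv0 _ hv
    rw [h] at this; exact hv0' (by simpa using this)
  have hA' : ∀ x, ∀ v ∈ V, x * v = 0 := fun x => (hA x).1 (by rw [h]; trivial)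
  rcases hsimple B (by
    intro x hx g
    rw [hB] at hx ⊢
    intro r
    refine hom_ext ℬ (AddMonoidHom.mulRight (decompose ℬ x g : R)) r fun h => ?_
    have := hx (decompose ℬ r h : R)
    rw [AddMonoidHom.mulRight_apply, ← comp_mul_left ℬ hmul (decompose ℬ r h).2, this]; simp) with h | h
  · have : v0 ∈ B := (hB _).2 fun r => hA' _ _ hv0
    rw [h] at this; exact hv0' (by simpa using this)
  obtain ⟨x, y, hxy⟩ := hR2
  exact hxy ((hB y).1 (by rw [h]; trivial) x)

theorem exists_idem [FiniteDimensional F R]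
    (hmul : ∀ g h : G, ∀ x ∈ ℬ g, ∀ y ∈ ℬ h, x * y ∈ ℬ (g * h))
    (hR2 : ∃ x y : R, x * y ≠ 0)
    (hsimple : ∀ J : TwoSidedIdeal R,
      (∀ x ∈ J, ∀ g : G, ((DirectSum.decompose ℬ x) g : R) ∈ J) → J = ⊥ ∨ J = ⊤) :
    ∃ e ∈ ℬ 1, e ≠ 0 ∧ e * e = e ∧ ∀ g, ∀ d ∈ ℬ g, d ≠ 0 → e * d = d → d * e = d →
      ∃ a ∈ ℬ g⁻¹, e * a = a ∧ a * e = a ∧ a * d = e := by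
  have : Nontrivial R := by
    obtain ⟨x, y, h⟩ := hR2
    exact ⟨_, _, h⟩
  obtain ⟨V, hV, hV0, hmin⟩ := exists_min (F := F) ℬ
  obtain ⟨w, hw, v', hv', hwv'⟩ := sq_ne_zero ℬ hmul hR2 hsimple V hV hV0
  obtain ⟨h, hh⟩ : ∃ h, w * (decompose ℬ v' h : R) ≠ 0 := by
    by_contra! hc
    exact hwv' (hom_ext ℬ (AddMonoidHom.mulLeft w) v' hc)
  obtain ⟨v, hv, hvV, hwv⟩ : ∃ v ∈ ℬ h, v ∈ V ∧ w * v ≠ 0 :=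
    ⟨_, (decompose ℬ v' h).2, hV.gr _ hv' _, hh⟩
  -- images under right multiplication by a homogeneous element
  have key : ∀ (U : Submodule F R) (k : G) (d : R), GLI ℬ U → d ∈ ℬ k → d ∈ V →
      (∃ u ∈ U, u * d ≠ 0) → ∀ z ∈ V, ∃ u ∈ U, u * d = z := by
    intro U k d hU hd hdV ⟨u, hu, hud⟩ z hz
    have : U.map (LinearMap.mulRight F d) = V := by
      apply hmin
      · constructor
        · rintro r _ ⟨x, hx, rfl⟩
          exact ⟨r * x, hU.mul _ _ hx, by simp [mul_assoc]⟩
        · rintro _ ⟨x, hx, rfl⟩ g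
          refine ⟨_, hU.gr x hx (g * k⁻¹), ?_⟩
          simp [comp_mul_right_eq ℬ hmul hd]
      · rintro _ ⟨x, hx, rfl⟩
        exact hV.mul _ _ hdV
      · rw [Submodule.ne_bot_iff]
        exact ⟨_, ⟨u, hu, rfl⟩, hud⟩
    rw [← this] at hz
    exact hz
  obtain ⟨e', he', hev'⟩ := key V h v hV hv hvV ⟨w, hw, hwv⟩ v hvV
  obtain ⟨e, he, heV, hev⟩ : ∃ e ∈ ℬ 1, e ∈ V ∧ e * v = v := by
    refine ⟨_, (decompose ℬ e' 1).2, hV.gr _ he' _, ?_⟩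
    rw [← comp_mul_right ℬ hmul hv, hev', one_mul, decompose_of_mem_same ℬ hv]
  have ann : ∀ z ∈ V, z * v = 0 → z = 0 := by
    have : V ⊓ LinearMap.ker (LinearMap.mulRight F v) = ⊥ := by
      by_contra hc
      have := hmin _ (by
        constructor
        · rintro r x ⟨hx, hx'⟩
          refine ⟨hV.mul _ _ hx, ?_⟩
          simp at hx'
          simp [mul_assoc, hx']
        · rintro x ⟨hx, hx'⟩ g
          refine ⟨hV.gr _ hx _, ?_⟩
          simp at hx'
          simp [← comp_mul_right ℬ hmul hv, hx']) inf_le_left hc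
      rw [← this] at hw
      exact hwv (by simpa using hw.2)
    intro z hz hzv
    have hz' : z ∈ V ⊓ LinearMap.ker (LinearMap.mulRight F v) := ⟨hz, by simpa using hzv⟩
    rw [this] at hz'
    simpa using hz'
  have hfix : ∀ z ∈ V, z * e = z := by
    intro z hz
    rw [← sub_eq_zero]
    apply ann _ (V.sub_mem (hV.mul _ _ heV) hz)
    rw [sub_mul, mul_assoc, hev, sub_self]
  refine ⟨e, he, ?_, hfix e heV, ?_⟩
  · rintro rfl
    apply hwv
    rw [← hev]; simp
  intro g d hd hd0 hed hde
  have hdV : d ∈ V := hde ▸ hV.mul _ _ heV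
  obtain ⟨r, -, hr⟩ := key ⊤ g d ⟨fun _ _ _ => trivial, fun _ _ _ => trivial⟩ hd hdV
    ⟨e, trivial, by rwa [hed]⟩ e heV
  have hr2 : (decompose ℬ r g⁻¹ : R) * d = e := by
    rw [← comp_mul_right ℬ hmul hd, hr, inv_mul_cancel, decompose_of_mem_same ℬ he]
  refine ⟨e * (decompose ℬ r g⁻¹ : R) * e, ?_, ?_, ?_, ?_⟩
  · have := hmul _ _ _ (hmul _ _ _ he _ (decompose ℬ r g⁻¹).2) _ he
    simpa using this
  · simp only [← mul_assoc, hfix e heV]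
  · simp only [mul_assoc, hfix e heV]
  · rw [mul_assoc, hed, mul_assoc, hr2, hfix e heV]

theorem card_eq [IsAlgClosed F] [FiniteDimensional F R]
    (hmul : ∀ g h : G, ∀ x ∈ ℬ g, ∀ y ∈ ℬ h, x * y ∈ ℬ (g * h))
    (e : R) (he : e ∈ ℬ 1) (he0 : e ≠ 0) (hee : e * e = e)
    (hinv : ∀ g, ∀ d ∈ ℬ g, d ≠ 0 → e * d = d → d * e = d →
      ∃ a ∈ ℬ g⁻¹, e * a = a ∧ a * e = a ∧ a * d = e) :
    ∃ H : Subgroup G, Finite H ∧ Module.finrank F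
      (LinearMap.range (LinearMap.mulLeft F e * LinearMap.mulRight F e)) = Nat.card H := by
  have h1 : ∀ x ∈ ℬ 1, e * x = x → x * e = x → ∃ c : F, x = c • e := by
    intro x hx hex hxe
    let D1 : Submodule F R := ℬ 1 ⊓ LinearMap.ker (LinearMap.mulLeft F e - LinearMap.id) ⊓
      LinearMap.ker (LinearMap.mulRight F e - LinearMap.id)
    have hD1 : ∀ z, z ∈ D1 ↔ z ∈ ℬ 1 ∧ e * z = z ∧ z * e = z := by
      intro z; simp [D1, sub_eq_zero, and_assoc]
    have : Nontrivial D1 := ⟨⟨⟨e, (hD1 e).2 ⟨he, hee, hee⟩⟩, 0, by simpa [Subtype.ext_iff] using he0⟩⟩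
    have hm : ∀ z ∈ D1, LinearMap.mulRight F x z ∈ D1 := by
      intro z hz
      rw [hD1] at hz ⊢
      obtain ⟨ha, hb, hc⟩ := hz
      refine ⟨by simpa using hmul _ _ _ ha _ hx, ?_, ?_⟩
      · simp [← mul_assoc, hb]
      · simp [mul_assoc, hxe]
    obtain ⟨c, hc⟩ := Module.End.exists_eigenvalue ((LinearMap.mulRight F x).restrict hm)
    obtain ⟨⟨y, hy⟩, hyc⟩ := hc.exists_hasEigenvector
    have hy0 : y ≠ 0 := by simpa [Subtype.ext_iff] using hyc.2
    have hyx : y * x = c • y := by simpa [Subtype.ext_iff] using hyc.apply_eq_smul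
    obtain ⟨ha, hb, hc⟩ := (hD1 y).1 hy
    obtain ⟨a, -, -, -, hay⟩ := hinv 1 y ha hy0 hb hc
    refine ⟨c, ?_⟩
    rw [← hex, ← hay, mul_assoc, hyx, mul_smul_comm]
  let H : Subgroup G := 
    { carrier := {g | ∃ d ∈ ℬ g, d ≠ 0 ∧ e * d = d ∧ d * e = d}
      one_mem' := ⟨e, he, he0, hee, hee⟩
      mul_mem' := by
        rintro g h ⟨d, hd, hd0, hd1, hd2⟩ ⟨d', hd', hd0', hd1', hd2'⟩
        refine ⟨d * d', hmul _ _ _ hd _ hd', ?_, by rw [← mul_assoc, hd1], by rw [mul_assoc, hd2']⟩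
        intro h0
        obtain ⟨a, -, -, -, ha⟩ := hinv g d hd hd0 hd1 hd2
        apply hd0'
        rw [← hd1', ← ha, mul_assoc, h0, mul_zero]
      inv_mem' := by
        rintro g ⟨d, hd, hd0, hd1, hd2⟩
        obtain ⟨a, h1, h2, h3, ha⟩ := hinv g d hd hd0 hd1 hd2
        refine ⟨a, h1, ?_, h2, h3⟩
        rintro rfl
        apply he0
        rw [← ha, zero_mul] }
  have hH : ∀ h : H, ∃ d ∈ ℬ h, d ≠ 0 ∧ e * d = d ∧ d * e = d := fun h => h.2
  choose b hb hb0 hb1 hb2 using hH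
  have hli : LinearIndependent F b := by
    have hind := (DirectSum.Decomposition.isInternal ℬ).submodule_iSupIndep
    exact (hind.comp Subtype.val_injective).linearIndependent _ hb hb0
  have hfin : Finite H := hli.finite
  have : Fintype H := Fintype.ofFinite H
  refine ⟨H, hfin, ?_⟩
  have hspan : LinearMap.range (LinearMap.mulLeft F e * LinearMap.mulRight F e) =
      Submodule.span F (Set.range b) := by
    apply le_antisymm
    · rintro _ ⟨x, rfl⟩
      simp only [Module.End.mul_apply, LinearMap.mulRight_apply, LinearMap.mulLeft_apply]
      induction x using DirectSum.Decomposition.inductionOn ℬ with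
      | zero => simp
      | add m n hm hn => simpa [add_mul, mul_add] using Submodule.add_mem _ hm hn
      | @homogeneous g m =>
        set z := e * (m * e) with hz
        have hzg : z ∈ ℬ g := by simpa using hmul _ _ _ he _ (hmul _ _ _ m.2 _ he)
        have hez : e * z = z := by rw [hz, ← mul_assoc, hee]
        have hze : z * e = z := by rw [hz]; simp only [mul_assoc, hee]
        by_cases hz0 : z = 0
        · rw [hz0]; exact Submodule.zero_mem _
        let g' : H := ⟨g, z, hzg, hz0, hez, hze⟩
        obtain ⟨a, ha1, ha2, ha3, ha⟩ := hinv g (b g') (hb g') (hb0 g') (hb1 g') (hb2 g')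
        obtain ⟨c, hc⟩ := h1 (z * a) (by simpa using hmul _ _ _ hzg _ ha1)
          (by rw [← mul_assoc, hez]) (by rw [mul_assoc, ha3])
        have : z = c • b g' := by
          rw [← hze, ← ha, ← mul_assoc, hc, smul_mul_assoc, hb1]
        rw [this]
        exact Submodule.smul_mem _ _ (Submodule.subset_span ⟨_, rfl⟩)
    · rw [Submodule.span_le]
      rintro _ ⟨h, rfl⟩
      exact ⟨b h, by simp [hb1, hb2]⟩
  rw [hspan, finrank_span_eq_card hli, Nat.card_eq_fintype_card]

/-- The trace of `y ↦ x * y * e`. -/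
noncomputable def T (e : R) : R →ₗ[F] F :=
  { toFun := fun x => LinearMap.trace F R (LinearMap.mulLeft F x * LinearMap.mulRight F e)
    map_add' := by
      intro x y
      rw [← map_add, ← add_mul]
      congr 2
      ext z; simp [add_mul]
    map_smul' := by
      intro c x
      rw [RingHom.id_apply, ← map_smul, ← smul_mul_assoc]
      congr 2
      ext z; simp [smul_mul_assoc] }

theorem T_apply (e x : R) : T (F := F) e x =
    LinearMap.trace F R (LinearMap.mulLeft F x * LinearMap.mulRight F e) := rfl

theorem T_comm (e x y : R) : T (F := F) e (x * y) = T e (y * x) := by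
  rw [T_apply, T_apply]
  have h1 : LinearMap.mulLeft F (x * y) * LinearMap.mulRight F e =
      LinearMap.mulLeft F x * (LinearMap.mulLeft F y * LinearMap.mulRight F e) := by
    ext z; simp [mul_assoc]
  have h2 : LinearMap.mulLeft F (y * x) * LinearMap.mulRight F e =
      (LinearMap.mulLeft F y * LinearMap.mulRight F e) * LinearMap.mulLeft F x := by
    ext z; simp [mul_assoc]
  rw [h1, h2, LinearMap.trace_mul_comm]

theorem T_ne (hmul : ∀ g h : G, ∀ x ∈ ℬ g, ∀ y ∈ ℬ h, x * y ∈ ℬ (g * h)) [FiniteDimensional F R]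
    {e : R} (he : e ∈ ℬ 1) {g : G} (hg : g ≠ 1) {x : R} (hx : x ∈ ℬ g) : T (F := F) e x = 0 := by
  rw [T_apply]
  refine LinearMap.trace_eq_zero_of_mapsTo_ne (DirectSum.Decomposition.isInternal ℬ)
    (fun h => g * h) (by simpa using hg) ?_
  intro h y hy
  simpa using hmul _ _ _ hx _ (hmul _ _ _ hy _ he)

theorem T_nil [IsAlgClosed F] [FiniteDimensional F R] (e x : R) (hee : e * e = e)
    (hx : ∀ c : F, ∃ y : R, c • x + y + y * (c • x) = 0) : T (F := F) e x = 0 := by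
  rw [T_apply, Module.End.trace_eq_sum_roots_charpoly_of_splits (IsAlgClosed.splits _)]
  apply Multiset.sum_eq_zero
  intro c hc
  have hc := Polynomial.isRoot_of_mem_roots hc
  rw [← Module.End.hasEigenvalue_iff_isRoot_charpoly] at hc
  obtain ⟨v, hv⟩ := hc.exists_hasEigenvector
  have h1 : x * (v * e) = c • v := by simpa using hv.apply_eq_smul
  by_contra hc0
  have hve : v * e = v := by
    have h5 : c • (v * e) = c • v := by
      rw [← smul_mul_assoc, ← h1, mul_assoc, mul_assoc, hee]
    simpa [smul_smul, inv_mul_cancel₀ hc0] using congrArg (fun z => c⁻¹ • z) h5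
  obtain ⟨y, hy⟩ := hx (-c⁻¹)
  have h2 : ((-c⁻¹) • x) * (v * e) = -v := by
    rw [smul_mul_assoc, h1, smul_smul, neg_mul, inv_mul_cancel₀ hc0, neg_smul, one_smul]
  have h3 : ((-c⁻¹) • x + y + y * ((-c⁻¹) • x)) * (v * e) = -v + y * (v * e) + y * (-v) := by
    rw [add_mul, add_mul, mul_assoc, h2]
  rw [hy, zero_mul] at h3
  rw [hve, mul_neg, add_assoc, add_neg_cancel, add_zero] at h3
  exact hv.2 (by rw [← neg_eq_zero, ← h3])
end

end GradedSimple

/-- A finite-dimensional graded simple algebra over an algebraically closed field whose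
characteristic is zero or coprime to the order of every finite subgroup of `G` is
semiprimitive: its Jacobson radical is zero, i.e. every two-sided ideal consisting of
quasi-regular elements is zero. -/
theorem stmt_12 {G : Type*} [Group G] [DecidableEq G] {F : Type*} [Field F] [IsAlgClosed F]
    {R : Type*} [NonUnitalRing R] [Module F R] [SMulCommClass F R R] [IsScalarTower F R R]
    [FiniteDimensional F R]
    (ℬ : G → Submodule F R) [DirectSum.Decomposition ℬ]
    (hmul : ∀ g h : G, ∀ x ∈ ℬ g, ∀ y ∈ ℬ h, x * y ∈ ℬ (g * h))
    -- `char F = 0` or `char F` is coprime to the order of every finite subgroup of `G`: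
    (hchar : ringChar F = 0 ∨
      ∀ H : Subgroup G, Finite H → Nat.Coprime (ringChar F) (Nat.card H))
    -- `R` is graded simple:
    (hR2 : ∃ x y : R, x * y ≠ 0)
    (hsimple : ∀ J : TwoSidedIdeal R,
      (∀ x ∈ J, ∀ g : G, ((DirectSum.decompose ℬ x) g : R) ∈ J) → J = ⊥ ∨ J = ⊤) :
    -- `R` is semiprimitive: every quasi-regular two-sided ideal is zero.
    ∀ I : TwoSidedIdeal R,
      (∀ x ∈ I, ∃ y : R, x + y + x * y = 0 ∧ x + y + y * x = 0) → I = ⊥ := by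
  open GradedSimple in
  intro I hI
  obtain ⟨e, he, he0, hee, hinv⟩ := exists_idem ℬ hmul hR2 hsimple
  obtain ⟨H, hHf, hH⟩ := card_eq ℬ hmul e he he0 hee hinv
  have hTe : T (F := F) e (e * e) ≠ 0 := by
    have hid : IsIdempotentElem (LinearMap.mulLeft F e * LinearMap.mulRight F e) := by
      ext z
      simp only [Module.End.mul_apply, LinearMap.mulLeft_apply, LinearMap.mulRight_apply, mul_assoc,
        hee]
      rw [← mul_assoc e e, hee]
    rw [hee, T_apply, (LinearMap.IsIdempotentElem.isProj_range _ hid).trace, hH]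
    intro h0
    have hdvd := (ringChar.spec F (Nat.card H)).1 h0
    rcases hchar with h | h
    · rw [h, zero_dvd_iff] at hdvd
      exact Nat.card_pos.ne' hdvd
    · have h1 := Nat.Coprime.eq_one_of_dvd (h H hHf) hdvd
      exact CharP.ringChar_ne_one h1
  let N : TwoSidedIdeal R := .mk' {x | ∀ y : R, T (F := F) e (x * y) = 0}
    (by simp) (by intro x y hx hy v; simp [add_mul, hx v, hy v])
    (by intro x hx v; simp [hx v])
    (by intro x y hy v; rw [mul_assoc, T_comm, mul_assoc]; exact hy _)
    (by intro x y hx v; rw [mul_assoc]; exact hx _)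
  have hN : ∀ x, x ∈ N ↔ ∀ y : R, T (F := F) e (x * y) = 0 := by
    intro x; simp [N]
  rcases hsimple N (by
    intro x hx g
    rw [hN] at hx ⊢
    intro y
    refine hom_ext ℬ ((T (F := F) e).toAddMonoidHom.comp
      (AddMonoidHom.mulLeft (DirectSum.decompose ℬ x g : R))) y fun h => ?_
    have hm := hmul _ _ _ (DirectSum.decompose ℬ x g).2 _ (DirectSum.decompose ℬ y h).2
    change T (F := F) e ((DirectSum.decompose ℬ x g : R) * (DirectSum.decompose ℬ y h : R)) = 0
    by_cases hgh : g * h = 1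
    · have h2 : T (F := F) e (x * (DirectSum.decompose ℬ y h : R)
          - (DirectSum.decompose ℬ x g : R) * (DirectSum.decompose ℬ y h : R)) = 0 := by
        refine hom_ext ℬ (T (F := F) e).toAddMonoidHom _ fun k => ?_
        change T (F := F) e _ = 0
        by_cases hk : k = 1
        · have : (DirectSum.decompose ℬ (x * (DirectSum.decompose ℬ y h : R)
            - (DirectSum.decompose ℬ x g : R) * (DirectSum.decompose ℬ y h : R)) k : R) = 0 := by
            rw [hk, ← hgh, DirectSum.decompose_sub, DirectSum.sub_apply, Submodule.coe_sub,
              comp_mul_right ℬ hmul (DirectSum.decompose ℬ y h).2,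
              DirectSum.decompose_of_mem_same ℬ hm, sub_self]
          rw [this, map_zero]
        · exact T_ne ℬ hmul he hk (SetLike.coe_mem _)
      rw [map_sub, hx, zero_sub, neg_eq_zero] at h2
      exact h2
    · exact T_ne ℬ hmul he hgh hm) with h | h
  · rw [eq_bot_iff, ← h]
    intro x hx
    rw [hN]
    intro y
    apply T_nil _ _ hee
    intro c
    obtain ⟨z, -, hz⟩ := hI (x * (c • y)) (I.mul_mem_right _ _ hx)
    exact ⟨z, by rwa [mul_smul_comm] at hz⟩
  · exact absurd ((hN e).1 (by rw [h]; trivial) e) hTe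
end

section
/- Let G be a finite group with |G| invertible in an algebraically closed field F. Then, for each n ≥ 1, there are up to graded isomorphism only finitely many n-dimensional G-graded simple algebras over F; in particular there are only finitely many finite-dimensional G-graded division algebras. -/
universe u v

/-- A "model" of a finite-dimensional `G`-graded `F`-algebra: a bilinear multiplication
and a `G`-indexed family of subspaces on the standard space `F^dim`. -/
structure GradedAlgModel (G : Type v) (F : Type u) [Group G] [Field F] where
  dim : ℕ
  mul : (Fin dim → F) →ₗ[F] (Fin dim → F) →ₗ[F] (Fin dim → F)
  grading : G → Submodule F (Fin dim → F)

/-- `R` (with grading `ℬ`) is isomorphic, as a graded algebra, to the model `s`. -/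
def IsGradedIsoToModel {G : Type v} [Group G] {F : Type u} [Field F]
    (R : Type u) [NonUnitalRing R] [Module F R]
    (ℬ : G → Submodule F R) (s : GradedAlgModel G F) : Prop :=
  ∃ e : R ≃ₗ[F] (Fin s.dim → F),
    (∀ x y : R, e (x * y) = s.mul (e x) (e y)) ∧
    ∀ g : G, (ℬ g).map (e : R →ₗ[F] (Fin s.dim → F)) = s.grading g

set_option linter.unusedSectionVars false
set_option linter.style.haveILetI false

namespace GrFin

section setup

variable {G : Type*} [Group G] [DecidableEq G] {F : Type*} [Field F]
  {R : Type*} [NonUnitalRing R] [Module F R]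
  (ℬ : G → Submodule F R) [DirectSum.Decomposition ℬ]

/-- Projection to the homogeneous component of degree `g`. -/
def pr (g : G) (x : R) : R := (DirectSum.decompose ℬ x g : R)

lemma pr_mem (g : G) (x : R) : pr ℬ g x ∈ ℬ g := (DirectSum.decompose ℬ x g).2

lemma pr_add (g : G) (x y : R) : pr ℬ g (x + y) = pr ℬ g x + pr ℬ g y := by
  simp [pr]

lemma pr_zero (g : G) : pr ℬ g (0 : R) = 0 := by
  simp [pr]

lemma pr_smul (g : G) (c : F) (x : R) : pr ℬ g (c • x) = c • pr ℬ g x := by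
  unfold pr
  rw [DirectSum.decompose_smul]
  rfl

lemma pr_sum {ι : Type*} (s : Finset ι) (g : G) (f : ι → R) :
    pr ℬ g (∑ i ∈ s, f i) = ∑ i ∈ s, pr ℬ g (f i) := by
  classical
  induction s using Finset.induction_on with
  | empty => simp [pr_zero]
  | insert a s ha ih => rw [Finset.sum_insert ha, Finset.sum_insert ha, pr_add, ih]

lemma pr_of_mem {g : G} {x : R} (hx : x ∈ ℬ g) (h : G) :
    pr ℬ h x = if h = g then x else 0 := by
  split_ifs with hh
  · subst hh; exact DirectSum.decompose_of_mem_same ℬ hx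
  · exact DirectSum.decompose_of_mem_ne ℬ hx (Ne.symm hh)

lemma hom_induction {p : R → Prop} (h0 : p 0) (hh : ∀ g, ∀ x ∈ ℬ g, p x)
    (ha : ∀ x y, p x → p y → p (x + y)) (x : R) : p x :=
  DirectSum.Decomposition.inductionOn ℬ h0 (fun m => hh _ m.1 m.2) ha x

lemma eq_zero_of_pr {x : R} (h : ∀ g, pr ℬ g x = 0) : x = 0 := by
  apply (DirectSum.decompose ℬ).injective
  rw [DirectSum.decompose_zero]
  ext g
  exact h g

lemma pr_mul_right
    (hmul : ∀ g h : G, ∀ x ∈ ℬ g, ∀ y ∈ ℬ h, x * y ∈ ℬ (g * h)) {h : G} {b : R} (hb : b ∈ ℬ h) (g : G) (x : R) :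
    pr ℬ g (x * b) = pr ℬ (g * h⁻¹) x * b := by
  induction x using hom_induction ℬ with
  | h0 => simp [pr_zero]
  | hh k x hx =>
    rw [pr_of_mem ℬ (hmul _ _ _ hx _ hb), pr_of_mem ℬ hx]
    by_cases hk : g = k * h
    · simp [hk]
    · have : g * h⁻¹ ≠ k := fun h' => hk (by rw [← h']; group)
      simp [hk, this]
  | ha x y hx hy => rw [add_mul, pr_add, hx, hy, pr_add, add_mul]

lemma pr_mul_left
    (hmul : ∀ g h : G, ∀ x ∈ ℬ g, ∀ y ∈ ℬ h, x * y ∈ ℬ (g * h)) {h : G} {b : R} (hb : b ∈ ℬ h) (g : G) (x : R) :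
    pr ℬ g (b * x) = b * pr ℬ (h⁻¹ * g) x := by
  induction x using hom_induction ℬ with
  | h0 => simp [pr_zero]
  | hh k x hx =>
    rw [pr_of_mem ℬ (hmul _ _ _ hb _ hx), pr_of_mem ℬ hx]
    by_cases hk : g = h * k
    · simp [hk]
    · have : h⁻¹ * g ≠ k := fun h' => hk (by rw [← h']; group)
      simp [hk, this]
  | ha x y hx hy => rw [mul_add, pr_add, hx, hy, pr_add, mul_add]

/-- A predicate cutting out a graded two-sided ideal. -/
lemma ideal_alt
    (hmul : ∀ g h : G, ∀ x ∈ ℬ g, ∀ y ∈ ℬ h, x * y ∈ ℬ (g * h))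
    (hs : ∀ J : TwoSidedIdeal R,
      (∀ x ∈ J, ∀ g : G, ((DirectSum.decompose ℬ x) g : R) ∈ J) → J = ⊥ ∨ J = ⊤)
    (p : R → Prop) (h0 : p 0) (ha : ∀ x y, p x → p y → p (x + y))
    (hn : ∀ x, p x → p (-x)) (hl : ∀ r x, p x → p (r * x)) (hr : ∀ x r, p x → p (x * r))
    (hg : ∀ x, p x → ∀ g, p (pr ℬ g x)) : (∀ x, p x → x = 0) ∨ ∀ x, p x := by
  let J : TwoSidedIdeal R := TwoSidedIdeal.mk' {x | p x} h0 (fun {x y} => ha x y)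
    (fun {x} => hn x) (fun {x y} => hl x y) (fun {x y} => hr x y)
  have hJ : ∀ x, x ∈ J ↔ p x := fun x => TwoSidedIdeal.mem_mk' _ _ _ _ _ _ _
  rcases hs J (fun x hx g => (hJ _).2 (hg x ((hJ x).1 hx) g)) with h | h
  · left
    intro x hx
    have := (hJ x).2 hx
    rw [h] at this
    exact (TwoSidedIdeal.mem_bot R).1 this
  · right
    intro x
    rw [← hJ, h]
    trivial

lemma prime_lemma
    (hmul : ∀ g h : G, ∀ x ∈ ℬ g, ∀ y ∈ ℬ h, x * y ∈ ℬ (g * h))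
    (hs : ∀ J : TwoSidedIdeal R,
      (∀ x ∈ J, ∀ g : G, ((DirectSum.decompose ℬ x) g : R) ∈ J) → J = ⊥ ∨ J = ⊤)
    (hne : ∃ x y : R, x * y ≠ 0) :
    (∀ x : R, (∀ s, x * s = 0) → x = 0) ∧
    (∀ h : G, ∀ b ∈ ℬ h, b ≠ 0 → ∀ a : R, a ≠ 0 → ∃ g, ∃ r ∈ ℬ g, a * r * b ≠ 0) := by
  obtain ⟨x₀, y₀, hxy⟩ := hne
  have hl : ∀ x : R, (∀ s, x * s = 0) → x = 0 := by
    refine (ideal_alt ℬ hmul hs (fun x => ∀ s, x * s = 0) (by simp) ?_ ?_ ?_ ?_ ?_).resolve_right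
      (fun h => hxy (h _ _))
    · intro x y hx hy s; rw [add_mul, hx, hy, add_zero]
    · intro x hx s; rw [neg_mul, hx, neg_zero]
    · intro r x hx s; rw [mul_assoc, hx, mul_zero]
    · intro x r hx s; rw [mul_assoc, hx]
    · intro x hx g s
      induction s using hom_induction ℬ with
      | h0 => simp
      | hh k s hk =>
        have := pr_mul_right ℬ hmul hk (g * k) x
        rw [hx, pr_zero, mul_inv_cancel_right] at this
        exact this.symm
      | ha s t h1 h2 => rw [mul_add, h1, h2, add_zero]
  have hr : ∀ x : R, (∀ s, s * x = 0) → x = 0 := by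
    refine (ideal_alt ℬ hmul hs (fun x => ∀ s, s * x = 0) (by simp) ?_ ?_ ?_ ?_ ?_).resolve_right
      (fun h => hxy (h _ _))
    · intro x y hx hy s; rw [mul_add, hx, hy, add_zero]
    · intro x hx s; rw [mul_neg, hx, neg_zero]
    · intro r x hx s; rw [← mul_assoc, hx]
    · intro x r hx s; rw [← mul_assoc, hx, zero_mul]
    · intro x hx g s
      induction s using hom_induction ℬ with
      | h0 => simp
      | hh k s hk =>
        have := pr_mul_left ℬ hmul hk (k * g) x
        rw [hx, pr_zero, inv_mul_cancel_left] at this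
        exact this.symm
      | ha s t h1 h2 => rw [add_mul, h1, h2, add_zero]
  refine ⟨hl, ?_⟩
  intro h b hb hb0 a ha0
  by_contra! hcon
  have hall : ∀ r, a * r * b = 0 := by
    intro r
    induction r using hom_induction ℬ with
    | h0 => simp
    | hh k s hk => exact hcon k s hk
    | ha s t h1 h2 => rw [mul_add, add_mul, h1, h2, add_zero]
  rcases ideal_alt ℬ hmul hs (fun x => ∀ r, x * r * b = 0) (by simp)
    (fun x y hx hy r => by rw [add_mul, add_mul, hx, hy, add_zero])
    (fun x hx r => by rw [neg_mul, neg_mul, hx, neg_zero])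
    (fun r x hx s => by rw [mul_assoc r x s, mul_assoc r, hx, mul_zero])
    (fun x r hx s => by rw [mul_assoc x r s, hx])
    (by
      intro x hx g s
      induction s using hom_induction ℬ with
      | h0 => simp
      | hh k s hk =>
        have := pr_mul_right ℬ hmul (hmul _ _ _ hk _ hb) (g * (k * h)) x
        rw [← mul_assoc x, hx, pr_zero, mul_inv_cancel_right, ← mul_assoc] at this
        exact this.symm
      | ha s t h1 h2 => rw [mul_add, add_mul, h1, h2, add_zero]) with hB | hB
  · exact ha0 (hB a hall)
  · exact hb0 (hr b fun s => hl _ fun t => by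
      exact absurd (hr b fun s => hr _ fun t => by rw [← mul_assoc]; exact hB t s) hb0)

end setup

section findim

variable {G : Type*} [Group G] [DecidableEq G] {F : Type*} [Field F]
  {R : Type*} [NonUnitalRing R] [Module F R] [SMulCommClass F R R]
  [IsScalarTower F R R] [FiniteDimensional F R]
  (ℬ : G → Submodule F R) [DirectSum.Decomposition ℬ]

/-- Existence of a homogeneous idempotent with graded division corner. -/
lemma exists_idem
    (hmul : ∀ g h : G, ∀ x ∈ ℬ g, ∀ y ∈ ℬ h, x * y ∈ ℬ (g * h))
    (hs : ∀ J : TwoSidedIdeal R,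
      (∀ x ∈ J, ∀ g : G, ((DirectSum.decompose ℬ x) g : R) ∈ J) → J = ⊥ ∨ J = ⊤)
    (hne : ∃ x y : R, x * y ≠ 0) :
    ∃ e ∈ ℬ 1, e ≠ 0 ∧ e * e = e ∧ ∀ g, ∀ x ∈ ℬ g, e * x = x → x * e = x → x ≠ 0 →
      ∃ y ∈ ℬ g⁻¹, e * y = y ∧ y * e = y ∧ y * x = e := by
  obtain ⟨hl, hprime⟩ := prime_lemma ℬ hmul hs hne
  let Q : Submodule F R → Prop := fun L =>
    (∀ r, ∀ x ∈ L, r * x ∈ L) ∧ (∀ x ∈ L, ∀ g, pr ℬ g x ∈ L)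
  have hR : (⊤ : Submodule F R) ≠ ⊥ := by
    obtain ⟨x, y, hxy⟩ := hne
    intro h
    have : x * y ∈ (⊤ : Submodule F R) := trivial
    rw [h] at this
    exact hxy ((Submodule.mem_bot F).1 this)
  obtain ⟨L, ⟨hL0, hLl, hLg⟩, hmin⟩ := IsArtinian.set_has_minimal {L : Submodule F R | L ≠ ⊥ ∧ Q L}
    ⟨⊤, hR, fun _ _ _ => trivial, fun _ _ _ => trivial⟩
  have hmin' : ∀ L' : Submodule F R, L' ≤ L → L' ≠ ⊥ → Q L' → L' = L := by
    intro L' hle h0 hQ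
    by_contra hne
    exact hmin L' ⟨h0, hQ⟩ (lt_of_le_of_ne hle hne)
  -- the image of `L` under right multiplication
  have himg : ∀ (h : G) (b : R), b ∈ ℬ h → b ∈ L → (∃ a ∈ L, a * b ≠ 0) →
      L.map (LinearMap.mulRight F b) = L := by
    rintro h b hb hbL ⟨a, haL, hab⟩
    apply hmin'
    · rintro _ ⟨x, hx, rfl⟩
      exact hLl _ _ hbL
    · intro hbot
      have : a * b ∈ L.map (LinearMap.mulRight F b) := ⟨a, haL, rfl⟩
      rw [hbot] at this
      exact hab ((Submodule.mem_bot F).1 this)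
    · constructor
      · rintro r _ ⟨x, hx, rfl⟩
        exact ⟨r * x, hLl _ _ hx, by simp [mul_assoc]⟩
      · rintro _ ⟨x, hx, rfl⟩ g
        exact ⟨pr ℬ (g * h⁻¹) x, hLg _ hx _, by
          simpa using (pr_mul_right ℬ hmul hb g x).symm⟩
  obtain ⟨x, hxL, hx0⟩ := Submodule.exists_mem_ne_zero_of_ne_bot hL0
  obtain ⟨g, hg⟩ : ∃ g, pr ℬ g x ≠ 0 := by
    by_contra! h
    exact hx0 (eq_zero_of_pr ℬ h)
  set a := pr ℬ g x with ha
  have haL : a ∈ L := hLg _ hxL _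
  have hag : a ∈ ℬ g := pr_mem ℬ _ _
  obtain ⟨k, r, hr, hara⟩ := hprime g a hag hg a hg
  set b := r * a with hb
  have hbL : b ∈ L := hLl _ _ haL
  have hbk : b ∈ ℬ (k * g) := hmul _ _ _ hr _ hag
  have hab : a * b ≠ 0 := by rw [hb, ← mul_assoc]; exact hara
  have hmap := himg _ b hbk hbL ⟨a, haL, hab⟩
  obtain ⟨e', he'L, he'b⟩ : b ∈ L.map (LinearMap.mulRight F b) := by rw [hmap]; exact hbL
  have he'b : e' * b = b := he'b
  set e := pr ℬ 1 e' with he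
  have heL : e ∈ L := hLg _ he'L _
  have he1 : e ∈ ℬ 1 := pr_mem ℬ _ _
  have heb : e * b = b := by
    have := pr_mul_right ℬ hmul hbk (k * g) e'
    rw [he'b, mul_inv_cancel, pr_of_mem ℬ hbk, if_pos rfl] at this
    exact this.symm
  have hker : ∀ x ∈ L, x * b = 0 → x = 0 := by
    intro x hx hxb
    by_contra hx0
    have : L ⊓ LinearMap.ker (LinearMap.mulRight F b) = L := by
      apply hmin' _ inf_le_left
      · intro hbot
        have : x ∈ L ⊓ LinearMap.ker (LinearMap.mulRight F b) := ⟨hx, hxb⟩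
        rw [hbot] at this
        exact hx0 ((Submodule.mem_bot F).1 this)
      · constructor
        · rintro r x ⟨hx, hxb⟩
          have hxb : x * b = 0 := hxb
          refine ⟨hLl _ _ hx, ?_⟩
          change r * x * b = 0
          rw [mul_assoc, hxb, mul_zero]
        · rintro x ⟨hx, hxb⟩ g'
          have hxb : x * b = 0 := hxb
          refine ⟨hLg _ hx _, ?_⟩
          change pr ℬ g' x * b = 0
          have := pr_mul_right ℬ hmul hbk (g' * (k * g)) x
          rw [hxb, pr_zero, mul_inv_cancel_right] at this
          exact this.symm
    have haK : a ∈ L ⊓ LinearMap.ker (LinearMap.mulRight F b) := by rw [this]; exact haL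
    exact hab haK.2
  have hxe : ∀ x ∈ L, x * e = x := by
    intro x hx
    have := hker (x * e - x) (L.sub_mem (hLl _ _ heL) hx)
      (by rw [sub_mul, mul_assoc, heb, sub_self])
    exact sub_eq_zero.1 this
  have hb0 : b ≠ 0 := by rintro h; rw [h, mul_zero] at hab; exact hab rfl
  refine ⟨e, he1, ?_, hxe e heL, ?_⟩
  · intro h; rw [h, zero_mul] at heb; exact hb0 heb.symm
  · intro g' x hxg hex hxe' hx0
    have hxL : x ∈ L := by rw [← hxe']; exact hLl _ _ heL
    have hm := himg g' x hxg hxL ⟨e, heL, by rw [hex]; exact hx0⟩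
    obtain ⟨y, hyL, hyx⟩ : e ∈ L.map (LinearMap.mulRight F x) := by rw [hm]; exact heL
    have hyx : y * x = e := hyx
    have hy1 : pr ℬ g'⁻¹ y * x = e := by
      have := pr_mul_right ℬ hmul hxg 1 y
      rw [hyx, pr_of_mem ℬ he1, if_pos rfl, one_mul] at this
      exact this.symm
    have hee := hxe e heL
    refine ⟨e * pr ℬ g'⁻¹ y, ?_, ?_, ?_, ?_⟩
    · have := hmul _ _ _ he1 _ (pr_mem ℬ g'⁻¹ y)
      rwa [one_mul] at this
    · rw [← mul_assoc, hee]
    · rw [mul_assoc, hxe _ (hLg _ hyL _)]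
    · rw [mul_assoc, hy1, hee]

/-- Normalised homogeneous elements of the graded division corner. -/
lemma exists_X
    (hmul : ∀ g h : G, ∀ x ∈ ℬ g, ∀ y ∈ ℬ h, x * y ∈ ℬ (g * h)) [Finite G] [IsAlgClosed F] (e : R) (he1 : e ∈ ℬ 1) (he0 : e ≠ 0) (hee : e * e = e)
    (hinv : ∀ g, ∀ x ∈ ℬ g, e * x = x → x * e = x → x ≠ 0 →
      ∃ y ∈ ℬ g⁻¹, e * y = y ∧ y * e = y ∧ y * x = e) :
    ∃ X : G → R, (∀ h, X h ∈ ℬ h) ∧ (∀ h, e * X h = X h) ∧ (∀ h, X h * e = X h) ∧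
      (∀ h, ∀ x ∈ ℬ h, e * x = x → x * e = x → ∃ c : F, x = c • X h) ∧
      ∀ a b, X a ≠ 0 → X b ≠ 0 → X (a * b) ≠ 0 ∧
        ∃ c : F, c ^ (Nat.card G).factorial = 1 ∧ X a * X b = c • X (a * b) := by
  classical
  haveI := Fintype.ofFinite G
  have hnz : ∀ g, ∀ x ∈ ℬ g, e * x = x → x * e = x → x ≠ 0 → ∀ z, e * z = z → z ≠ 0 →
      x * z ≠ 0 := by
    intro g x hx h1 h2 h0 z hz hz0 hxz
    obtain ⟨y, _, _, _, hyx⟩ := hinv g x hx h1 h2 h0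
    apply hz0
    rw [← hz, ← hyx, mul_assoc, hxz, mul_zero]
  have hone : ∀ x ∈ ℬ 1, e * x = x → x * e = x → ∃ c : F, x = c • e := by
    intro x hx h1 h2
    let W : Submodule F R := ℬ 1 ⊓ LinearMap.ker (LinearMap.mulLeft F e - LinearMap.id)
    have hW : ∀ z, z ∈ W ↔ z ∈ ℬ 1 ∧ e * z = z := by
      intro z
      simp [W, sub_eq_zero]
    have hst : ∀ z ∈ W, LinearMap.mulLeft F x z ∈ W := by
      intro z hz
      rw [hW] at hz ⊢
      refine ⟨?_, ?_⟩
      · have := hmul _ _ _ hx _ hz.1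
        rwa [one_mul] at this
      · simp only [LinearMap.mulLeft_apply]
        rw [← mul_assoc, h1]
    haveI : Nontrivial W := ⟨⟨⟨e, (hW e).2 ⟨he1, hee⟩⟩, 0, fun h => he0 (congrArg Subtype.val h)⟩⟩
    obtain ⟨c, hc⟩ := Module.End.exists_eigenvalue ((LinearMap.mulLeft F x).restrict hst)
    obtain ⟨z, hz⟩ := hc.exists_hasEigenvector
    have hz1 : x * (z : R) = c • (z : R) := congrArg Subtype.val hz.apply_eq_smul
    have hz0 : (z : R) ≠ 0 := fun h => hz.2 (Subtype.ext h)
    refine ⟨c, ?_⟩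
    by_contra hne
    refine hnz 1 (x - c • e) (Submodule.sub_mem _ hx (Submodule.smul_mem _ _ he1)) ?_ ?_
      (sub_ne_zero.2 hne) z ((hW z).1 z.2).2 hz0 ?_
    · rw [mul_sub, h1, mul_smul_comm, hee]
    · rw [sub_mul, h2, smul_mul_assoc, hee]
    · rw [sub_mul, hz1, smul_mul_assoc, ((hW z).1 z.2).2, sub_self]
  -- choose X0
  have hX0 : ∀ h : G, ∃ x ∈ ℬ h, e * x = x ∧ x * e = x ∧
      ∀ z ∈ ℬ h, e * z = z → z * e = z → ∃ c : F, z = c • x := by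
    intro h
    by_cases hex : ∃ x ∈ ℬ h, e * x = x ∧ x * e = x ∧ x ≠ 0
    · obtain ⟨x, hx, h1, h2, h0⟩ := hex
      refine ⟨x, hx, h1, h2, ?_⟩
      intro z hz hz1 hz2
      obtain ⟨y, hy, hy1, hy2, hyx⟩ := hinv h x hx h1 h2 h0
      obtain ⟨c, hc⟩ := hone (z * y)
        (by have := hmul _ _ _ hz _ hy; rwa [mul_inv_cancel] at this)
        (by rw [← mul_assoc, hz1]) (by rw [mul_assoc, hy2])
      refine ⟨c, ?_⟩
      rw [← hz2, ← hyx, ← mul_assoc, hc, smul_mul_assoc, h1]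
    · push Not at hex
      refine ⟨0, Submodule.zero_mem _, by simp, by simp, ?_⟩
      intro z hz h1 h2
      exact ⟨0, by simpa using hex z hz h1 h2⟩
  choose X hXm hX1 hX2 hXs using hX0
  have hα : ∀ a b, ∃ c : F, X a * X b = c • X (a * b) := fun a b =>
    hXs (a * b) _ (hmul _ _ _ (hXm a) _ (hXm b)) (by rw [← mul_assoc, hX1])
      (by rw [mul_assoc, hX2])
  choose α hα using hα
  have hPmul : ∀ a b, X a ≠ 0 → X b ≠ 0 → X (a * b) ≠ 0 ∧ α a b ≠ 0 := by
    intro a b ha hb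
    have := hnz a (X a) (hXm a) (hX1 a) (hX2 a) ha (X b) (hX1 b) hb
    rw [hα] at this
    exact ⟨right_ne_zero_of_smul this, left_ne_zero_of_smul this⟩
  have hPinv : ∀ a, X a ≠ 0 → X a⁻¹ ≠ 0 := by
    intro a ha h0
    obtain ⟨y, hy, hy1, hy2, hyx⟩ := hinv a (X a) (hXm a) (hX1 a) (hX2 a) ha
    obtain ⟨c, hc⟩ := hXs _ y hy hy1 hy2
    rw [hc, h0, smul_zero, zero_mul] at hyx
    exact he0 hyx.symm
  have hcoc : ∀ a b k, X a ≠ 0 → X b ≠ 0 → X k ≠ 0 →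
      α a b * α (a * b) k = α b k * α a (b * k) := by
    intro a b k ha hb hk
    have h1 : X a * X b * X k = (α a b * α (a * b) k) • X (a * b * k) := by
      rw [hα, smul_mul_assoc, hα, smul_smul]
    have h2 : X a * (X b * X k) = (α b k * α a (b * k)) • X (a * b * k) := by
      rw [hα, mul_smul_comm, hα, smul_smul, mul_assoc a b k]
    rw [mul_assoc, h2] at h1
    have h3 := (hPmul _ _ (hPmul a b ha hb).1 hk).1
    exact (smul_left_injective F h3 h1).symm
  let H : Finset G := Finset.univ.filter fun h => X h ≠ 0
  have hH : ∀ h, h ∈ H ↔ X h ≠ 0 := by simp [H]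
  let μ : G → F := fun a => ∏ k ∈ H, α a k
  have hμ0 : ∀ a, X a ≠ 0 → μ a ≠ 0 := fun a ha =>
    Finset.prod_ne_zero_iff.2 fun k hk => (hPmul a k ha ((hH k).1 hk)).2
  have hμ : ∀ a b, X a ≠ 0 → X b ≠ 0 → α a b ^ H.card * μ (a * b) = μ b * μ a := by
    intro a b ha hb
    have h1 : ∏ k ∈ H, α a (b * k) = μ a := by
      refine Finset.prod_bij (fun k _ => b * k) ?_ ?_ ?_ ?_
      · intro k hk
        exact (hH _).2 (hPmul b k hb ((hH k).1 hk)).1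
      · intro k _ k' _ h
        exact mul_left_cancel h
      · intro k hk
        exact ⟨b⁻¹ * k, (hH _).2 (hPmul _ _ (hPinv b hb) ((hH k).1 hk)).1, by group⟩
      · intro k _; rfl
    rw [← h1, ← Finset.prod_const, ← Finset.prod_mul_distrib, ← Finset.prod_mul_distrib]
    exact Finset.prod_congr rfl fun k hk => hcoc a b k ha hb ((hH k).1 hk)
  by_cases hHe : H = ∅
  · refine ⟨X, hXm, hX1, hX2, hXs, ?_⟩
    intro a b ha
    have := (hH a).2 ha
    rw [hHe] at this
    simp at this
  have hHpos : 0 < H.card := Finset.card_pos.2 (Finset.nonempty_iff_ne_empty.2 hHe)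
  have hHle : H.card ≤ Nat.card G := by
    rw [Nat.card_eq_fintype_card]; exact Finset.card_le_univ _
  have hν : ∀ a, ∃ z : F, z ≠ 0 ∧ (X a ≠ 0 → z ^ H.card = μ a) := by
    intro a
    by_cases ha : X a ≠ 0
    · obtain ⟨z, hz⟩ := IsAlgClosed.exists_pow_nat_eq (μ a) hHpos
      refine ⟨z, ?_, fun _ => hz⟩
      rintro rfl
      rw [zero_pow hHpos.ne'] at hz
      exact hμ0 a ha hz.symm
    · exact ⟨1, one_ne_zero, fun h => absurd h ha⟩
  choose ν hν0 hν using hν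
  refine ⟨fun a => (ν a)⁻¹ • X a, fun h => Submodule.smul_mem _ _ (hXm h),
    fun h => by simp only [mul_smul_comm, hX1], fun h => by simp only [smul_mul_assoc, hX2], ?_, ?_⟩
  · intro h x hx h1 h2
    obtain ⟨c, hc⟩ := hXs h x hx h1 h2
    refine ⟨c * ν h, ?_⟩
    simp only
    rw [smul_smul, mul_assoc, mul_inv_cancel₀ (hν0 h), mul_one, hc]
  · intro a b ha hb
    have ha := right_ne_zero_of_smul ha
    have hb := right_ne_zero_of_smul hb
    have hab := (hPmul a b ha hb).1
    refine ⟨smul_ne_zero (inv_ne_zero (hν0 _)) hab, α a b * ν (a * b) * ((ν a)⁻¹ * (ν b)⁻¹), ?_, ?_⟩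
    · obtain ⟨m, hm⟩ := Nat.dvd_factorial hHpos hHle
      rw [hm, pow_mul, mul_pow (α a b * _), mul_pow (α a b), mul_pow (ν a)⁻¹, inv_pow, inv_pow, hν _ ha, hν _ hb, hν _ hab,
        hμ a b ha hb]
      have h1 := hμ0 a ha
      have h2 := hμ0 b hb
      have : μ b * μ a * ((μ a)⁻¹ * (μ b)⁻¹) = 1 := by field_simp
      rw [this, one_pow]
    · rw [smul_mul_assoc, mul_smul_comm, hα, smul_smul, smul_smul, smul_smul]
      congr 1
      have := hν0 (a * b)
      field_simp

/-- A complete system of matrix units. -/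
lemma exists_units
    (hmul : ∀ g h : G, ∀ x ∈ ℬ g, ∀ y ∈ ℬ h, x * y ∈ ℬ (g * h))
    (hs : ∀ J : TwoSidedIdeal R,
      (∀ x ∈ J, ∀ g : G, ((DirectSum.decompose ℬ x) g : R) ∈ J) → J = ⊥ ∨ J = ⊤)
    (hne : ∃ x y : R, x * y ≠ 0)
    (e : R) (he1 : e ∈ ℬ 1) (he0 : e ≠ 0) (hee : e * e = e)
    (hinv : ∀ g, ∀ x ∈ ℬ g, e * x = x → x * e = x → x ≠ 0 →
      ∃ y ∈ ℬ g⁻¹, e * y = y ∧ y * e = y ∧ y * x = e) :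
    ∃ (k : ℕ) (u v : Fin k → R) (d : Fin k → G), (∀ i, u i ∈ ℬ (d i)) ∧ (∀ i, v i ∈ ℬ (d i)⁻¹) ∧
      (∀ i, u i * e = u i) ∧ (∀ i, e * v i = v i) ∧
      (∀ i j, v i * u j = if i = j then e else 0) ∧
      (∀ x, (∑ i, u i * v i) * x = x) ∧ (∀ x, x * (∑ i, u i * v i) = x) := by
  obtain ⟨hl, hprime⟩ := prime_lemma ℬ hmul hs hne
  by_contra hcon
  have key : ∀ k : ℕ, ∃ (u v : Fin k → R) (d : Fin k → G),
      (∀ i, u i ∈ ℬ (d i)) ∧ (∀ i, v i ∈ ℬ (d i)⁻¹) ∧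
      (∀ i, u i * e = u i) ∧ (∀ i, e * v i = v i) ∧
      (∀ i j, v i * u j = if i = j then e else 0) := by
    intro k
    induction k with
    | zero => exact ⟨Fin.elim0, Fin.elim0, Fin.elim0, fun i => i.elim0, fun i => i.elim0,
        fun i => i.elim0, fun i => i.elim0, fun i => i.elim0⟩
    | succ k ih =>
      obtain ⟨u, v, d, hu, hv, hue, hev, hvu⟩ := ih
      set f := ∑ i, u i * v i with hf
      have hf1 : f ∈ ℬ 1 := Submodule.sum_mem _ fun i _ => by
        have := hmul _ _ _ (hu i) _ (hv i)
        rwa [mul_inv_cancel] at this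
      have hvf : ∀ i, v i * f = v i := by
        intro i
        simp [hf, Finset.mul_sum, ← mul_assoc, hvu, hev]
      have hfu : ∀ i, f * u i = u i := by
        intro i
        simp [hf, Finset.sum_mul, mul_assoc, hvu, hue]
      have hff : f * f = f := by
        have : (∑ i, u i * v i) * f = ∑ i, u i * v i := by
          rw [Finset.sum_mul]
          exact Finset.sum_congr rfl fun i _ => by rw [mul_assoc, hvf]
        exact this
      obtain ⟨g, x, hx, hfx⟩ : ∃ g, ∃ x ∈ ℬ g, x - f * x ≠ 0 := by
        by_contra! hall
        have hleft : ∀ x, f * x = x := by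
          intro x
          induction x using hom_induction ℬ with
          | h0 => simp
          | hh g x hx => exact (sub_eq_zero.1 (hall g x hx)).symm
          | ha x y h1 h2 => rw [mul_add, h1, h2]
        refine hcon ⟨k, u, v, d, hu, hv, hue, hev, hvu, hleft, fun x => ?_⟩
        have := hl (x * f - x) (fun s => by rw [sub_mul, mul_assoc, hleft, sub_self])
        exact sub_eq_zero.1 this
      obtain ⟨k1, r, hr, hwr⟩ := hprime 1 e he1 he0 _ hfx
      have hwm : x - f * x ∈ ℬ g := Submodule.sub_mem _ hx (by
        have := hmul _ _ _ hf1 _ hx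
        rwa [one_mul] at this)
      set w := (x - f * x) * r * e with hw
      have hwg : w ∈ ℬ (g * k1) := by
        have := hmul _ _ _ (hmul _ _ _ hwm _ hr) _ he1
        rwa [mul_one] at this
      have hfw : f * w = 0 := by
        rw [hw, ← mul_assoc, ← mul_assoc, mul_sub, ← mul_assoc f f, hff, sub_self, zero_mul,
          zero_mul]
      have hwe : w * e = w := by rw [hw, mul_assoc, hee]
      obtain ⟨k2, s, hsm, hsw⟩ := hprime _ w hwg hwr e he0
      have hesm : e * s ∈ ℬ k2 := by
        have := hmul _ _ _ he1 _ hsm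
        rwa [one_mul] at this
      obtain ⟨y, hy, hey, hye, hyw⟩ := hinv _ (e * s * w) (hmul _ _ _ hesm _ hwg)
        (by rw [← mul_assoc e (e * s) w, ← mul_assoc e e s, hee]) (by rw [mul_assoc (e * s) w e, hwe]) hsw
      set z := y * (e * s) with hz
      have hzm : z ∈ ℬ (g * k1)⁻¹ := by
        have := hmul _ _ _ hy _ hesm
        rwa [show (k2 * (g * k1))⁻¹ * k2 = (g * k1)⁻¹ by group] at this
      have hzw : z * w = e := by rw [hz, mul_assoc, hyw]
      have hez : e * z = z := by rw [hz, ← mul_assoc, hey]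
      refine ⟨Fin.cons w u, Fin.cons (z - z * f) v, Fin.cons (g * k1) d, ?_, ?_, ?_, ?_, ?_⟩
      · intro i
        refine Fin.cases ?_ (fun i => ?_) i
        · simpa using hwg
        · simpa using hu i
      · intro i
        refine Fin.cases ?_ (fun i => ?_) i
        · have := hmul _ _ _ hzm _ hf1
          rw [mul_one] at this
          exact Submodule.sub_mem _ hzm this
        · simpa using hv i
      · intro i
        refine Fin.cases ?_ (fun i => ?_) i
        · simpa using hwe
        · simpa using hue i
      · intro i
        refine Fin.cases ?_ (fun i => ?_) i
        · simp [mul_sub, ← mul_assoc, hez]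
        · simpa using hev i
      · intro i j
        refine Fin.cases ?_ (fun i => ?_) i
        · refine Fin.cases ?_ (fun j => ?_) j
          · simp [sub_mul, mul_assoc, hfw, hzw]
          · have : (0 : Fin (k+1)) ≠ j.succ := (Fin.succ_ne_zero j).symm
            simp [sub_mul, mul_assoc, hfu, this]
        · refine Fin.cases ?_ (fun j => ?_) j
          · have : v i * w = 0 := by rw [← hvf, mul_assoc, hfw, mul_zero]
            simp [this]
          · simp [hvu]
  obtain ⟨u, v, d, hu, hv, hue, hev, hvu⟩ := key (Module.finrank F R + 1)
  have hli : LinearIndependent F u := by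
    rw [Fintype.linearIndependent_iff]
    intro c hc i
    have : v i * ∑ j, c j • u j = 0 := by rw [hc, mul_zero]
    simp [Finset.mul_sum, mul_smul_comm, hvu] at this
    exact this.resolve_right he0
  have := hli.fintype_card_le_finrank
  simp at this

/-- The homogeneous basis with structure constants in a finite set. -/
lemma exists_basis
    (hmul : ∀ g h : G, ∀ x ∈ ℬ g, ∀ y ∈ ℬ h, x * y ∈ ℬ (g * h)) [Finite G] (N k : ℕ) (e : R) (X : G → R) (hX : ∀ h, X h ∈ ℬ h)
    (hX1 : ∀ h, e * X h = X h) (hX2 : ∀ h, X h * e = X h)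
    (hXs : ∀ h, ∀ x ∈ ℬ h, e * x = x → x * e = x → ∃ c : F, x = c • X h)
    (hXX : ∀ a b, X a ≠ 0 → X b ≠ 0 → X (a * b) ≠ 0 ∧
        ∃ c : F, c ^ N = 1 ∧ X a * X b = c • X (a * b))
    (he1 : e ∈ ℬ 1) (hee : e * e = e)
    (u v : Fin k → R) (d : Fin k → G) (hu : ∀ i, u i ∈ ℬ (d i)) (hv : ∀ i, v i ∈ ℬ (d i)⁻¹)
    (hue : ∀ i, u i * e = u i) (hev : ∀ i, e * v i = v i)
    (hvu : ∀ i j, v i * u j = if i = j then e else 0)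
    (hl : ∀ x, (∑ i, u i * v i) * x = x) (hr : ∀ x, x * (∑ i, u i * v i) = x) :
    ∃ (b : Module.Basis (Fin (Module.finrank F R)) F R) (deg : Fin (Module.finrank F R) → G),
      (∀ i, b i ∈ ℬ (deg i)) ∧
      ∀ i j l, b.repr (b i * b j) l ∈ {c : F | c = 0 ∨ c ^ N = 1} := by
  classical
  haveI := Fintype.ofFinite G
  let ι := Fin k × {h : G // X h ≠ 0} × Fin k
  let B : ι → R := fun t => u t.1 * X t.2.1 * v t.2.2
  have hcomp : ∀ (i j : Fin k) (t : ι), v i * B t * u j =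
      if i = t.1 ∧ t.2.2 = j then X t.2.1 else 0 := by
    rintro i j ⟨i', h, j'⟩
    simp only [B]
    have : v i * (u i' * X h * v j') * u j = (v i * u i') * X h * (v j' * u j) := by
      simp only [mul_assoc]
    rw [this, hvu, hvu]
    by_cases h1 : i = i' <;> by_cases h2 : j' = j <;> simp [h1, h2, hX1, hX2]
  have hli : LinearIndependent F B := by
    rw [Fintype.linearIndependent_iff]
    rintro c hc ⟨i, h, j⟩
    have h1 : v i * (∑ t, c t • B t) * u j = 0 := by rw [hc, mul_zero, zero_mul]
    rw [Finset.mul_sum, Finset.sum_mul] at h1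
    simp only [mul_smul_comm, smul_mul_assoc, hcomp] at h1
    have h2 : pr ℬ h (∑ t : ι, c t • if i = t.1 ∧ t.2.2 = j then X t.2.1 else 0) = 0 := by
      rw [h1, pr_zero]
    rw [pr_sum, Finset.sum_eq_single (i, h, j)] at h2
    · simp only [and_self, if_true, pr_smul, pr_of_mem ℬ (hX _)] at h2
      exact (smul_eq_zero.1 h2).resolve_right h.2
    · rintro ⟨i', h', j'⟩ _ hne
      rw [pr_smul]
      by_cases hc : i = i' ∧ j' = j
      · have : (h : G) ≠ h' := fun hh => hne (by
          obtain ⟨rfl, rfl⟩ := hc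
          rw [Subtype.ext hh])
        simp only [if_pos hc, pr_of_mem ℬ (hX _), if_neg this, smul_zero]
      · simp only [if_neg hc, pr_zero, smul_zero]
    · simp
  have hsp : ∀ i j, ∀ x : R, e * x = x → x * e = x → u i * x * v j ∈ Submodule.span F (Set.range B) := by
    intro i j x h1 h2
    have hx : x = ∑ h : G, pr ℬ h x := by
      conv_lhs => rw [← DirectSum.sum_support_decompose ℬ x]
      refine Finset.sum_subset (Finset.subset_univ _) ?_
      intro h _ hh
      simpa [DFinsupp.mem_support_iff] using hh
    rw [hx, Finset.mul_sum, Finset.sum_mul]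
    refine Submodule.sum_mem _ fun h _ => ?_
    obtain ⟨c, hc⟩ := hXs h (pr ℬ h x) (pr_mem ℬ _ _)
      (by have := pr_mul_left ℬ hmul he1 h x; rw [h1] at this; simpa using this.symm)
      (by have := pr_mul_right ℬ hmul he1 h x; rw [h2] at this; simpa using this.symm)
    rw [hc, mul_smul_comm, smul_mul_assoc]
    apply Submodule.smul_mem
    by_cases h0 : X h = 0
    · rw [h0, mul_zero, zero_mul]; exact Submodule.zero_mem _
    · exact Submodule.subset_span ⟨(i, ⟨h, h0⟩, j), rfl⟩
  have htop : ⊤ ≤ Submodule.span F (Set.range B) := by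
    intro x _
    have hx : x = ∑ i, ∑ j, u i * (e * (v i * x * u j) * e) * v j := by
      conv_lhs => rw [← hl x, ← hr (_ * x), Finset.sum_mul, Finset.sum_mul]
      refine Finset.sum_congr rfl fun i _ => ?_
      rw [Finset.mul_sum]
      refine Finset.sum_congr rfl fun j _ => ?_
      have h1 : u i * (e * (v i * x * u j) * e) * v j = (u i * (e * v i)) * x * ((u j * e) * v j) := by
        simp only [mul_assoc]
      rw [h1, hev, hue]
    rw [hx]
    refine Submodule.sum_mem _ fun i _ => Submodule.sum_mem _ fun j _ => hsp i j _ ?_ ?_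
    · rw [← mul_assoc, ← mul_assoc, hee]
    · rw [mul_assoc, hee]
  let b := Module.Basis.mk hli htop
  have hb : ∀ t, b t = B t := fun t => Module.Basis.mk_apply hli htop t
  have hcard : Fintype.card ι = Module.finrank F R := (Module.finrank_eq_card_basis b).symm
  let eqv : ι ≃ Fin (Module.finrank F R) := Fintype.equivFinOfCardEq hcard
  refine ⟨b.reindex eqv, fun i => d (eqv.symm i).1 * (eqv.symm i).2.1 * (d (eqv.symm i).2.2)⁻¹,
    ?_, ?_⟩
  · intro i
    rw [Module.Basis.reindex_apply, hb]
    exact hmul _ _ _ (hmul _ _ _ (hu _) _ (hX _)) _ (hv _)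
  · intro i j l
    rw [Module.Basis.reindex_apply, Module.Basis.reindex_apply, Module.Basis.repr_reindex_apply]
    generalize eqv.symm i = s
    generalize eqv.symm j = t
    generalize eqv.symm l = m
    obtain ⟨i1, h1, j1⟩ := s
    obtain ⟨i2, h2, j2⟩ := t
    obtain ⟨hne, c, hc, hcm⟩ := hXX h1 h2 h1.2 h2.2
    have hprod : b (i1, h1, j1) * b (i2, h2, j2) =
        if j1 = i2 then c • b (i1, ⟨h1 * h2, hne⟩, j2) else 0 := by
      simp only [hb, B]
      have : u i1 * X h1 * v j1 * (u i2 * X h2 * v j2) =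
        u i1 * (X h1 * (v j1 * u i2)) * (X h2 * v j2) := by simp only [mul_assoc]
      rw [this, hvu]
      split_ifs with hj
      · rw [hX2, ← mul_assoc, mul_assoc (u i1), hcm, mul_smul_comm, smul_mul_assoc]
      · simp
    rw [hprod]
    split_ifs with hj
    · rw [map_smul, Module.Basis.repr_self]
      simp only [Finsupp.smul_apply, Finsupp.single_apply, Set.mem_ofPred_eq]
      split_ifs
      · right; simpa using hc
      · left; simp
    · left; simp

end findim

end GrFin

/-- Multiplication attached to structure constants. -/
noncomputable def grfinMul {F : Type u} [Field F] (m : ℕ) (c : Fin m → Fin m → Fin m → F) :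
    (Fin m → F) →ₗ[F] (Fin m → F) →ₗ[F] (Fin m → F) :=
  (Pi.basisFun F (Fin m)).constr F fun i => (Pi.basisFun F (Fin m)).constr F fun j => c i j

/-- Model attached to structure constants and degrees. -/
noncomputable def grfinModel {G : Type v} {F : Type u} [Group G] [Field F] (S : Set F) (m : ℕ)
    (p : (Fin m → Fin m → Fin m → S) × (Fin m → G)) : GradedAlgModel G F where
  dim := m
  mul := grfinMul m fun i j l => (p.1 i j l : F)
  grading := fun g => Submodule.span F {x | ∃ i, p.2 i = g ∧ x = Pi.single i 1}

lemma grfin_mul_eq {F : Type u} [Field F]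
    (R : Type u) [NonUnitalRing R] [Module F R] [SMulCommClass F R R]
    [IsScalarTower F R R] (m : ℕ) (b : Module.Basis (Fin m) F R) (x y : R) :
    b.equivFun (x * y) =
      grfinMul m (fun i j l => b.repr (b i * b j) l) (b.equivFun x) (b.equivFun y) := by
  have : (LinearMap.mul F R).compr₂ (b.equivFun : R →ₗ[F] (Fin m → F)) =
      (grfinMul m (fun i j l => b.repr (b i * b j) l)).compl₁₂
        (b.equivFun : R →ₗ[F] (Fin m → F)) (b.equivFun : R →ₗ[F] (Fin m → F)) := by
    refine b.ext fun i => b.ext fun j => ?_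
    have hs : ∀ i : Fin m, b.equivFun (b i) = Pi.basisFun F (Fin m) i := by
      intro i
      ext l
      simp [Pi.single_apply, eq_comm]
    simp only [LinearMap.compr₂_apply, LinearMap.compl₁₂_apply, LinearEquiv.coe_coe, grfinMul]
    rw [hs, hs, Module.Basis.constr_basis, Module.Basis.constr_basis]
    ext l
    simp
  exact LinearMap.congr_fun (LinearMap.congr_fun this x) y

lemma grfin_grading_eq {G : Type v} [Group G] [DecidableEq G] {F : Type u} [Field F]
    (R : Type u) [NonUnitalRing R] [Module F R]
    (ℬ : G → Submodule F R) [DirectSum.Decomposition ℬ]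
    (m : ℕ) (b : Module.Basis (Fin m) F R) (deg : Fin m → G) (hb : ∀ i, b i ∈ ℬ (deg i)) (g : G) :
    (ℬ g).map (b.equivFun : R →ₗ[F] (Fin m → F)) =
      Submodule.span F {x | ∃ i, deg i = g ∧ x = Pi.single i 1} := by
  have hs : ∀ i : Fin m, b.equivFun (b i) = Pi.single i 1 := by
    intro i
    ext l
    simp [Pi.single_apply, eq_comm]
  apply le_antisymm
  · rintro _ ⟨x, hx, rfl⟩
    have h1 : x = ∑ i, b.repr x i • GrFin.pr ℬ g (b i) := by
      have h2 : GrFin.pr ℬ g x = x := by rw [GrFin.pr_of_mem ℬ hx g, if_pos rfl]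
      have h3 : GrFin.pr ℬ g (∑ i, b.repr x i • b i) = ∑ i, b.repr x i • GrFin.pr ℬ g (b i) := by
        rw [GrFin.pr_sum]
        simp only [GrFin.pr_smul]
      rw [← h3, b.sum_repr, h2]
    rw [h1]
    simp only [LinearEquiv.coe_coe]
    rw [map_sum]
    refine Submodule.sum_mem _ fun i _ => ?_
    rw [map_smul]
    apply Submodule.smul_mem
    rw [GrFin.pr_of_mem ℬ (hb i)]
    split_ifs with h
    · exact Submodule.subset_span ⟨i, h.symm, hs i⟩
    · rw [map_zero]; exact Submodule.zero_mem _
  · refine Submodule.span_le.2 ?_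
    rintro _ ⟨i, hi, rfl⟩
    exact ⟨b i, hi ▸ hb i, hs i⟩

lemma grfin_iso {G : Type v} [Group G] [DecidableEq G] {F : Type u} [Field F] (S : Set F)
    (R : Type u) [NonUnitalRing R] [Module F R] [SMulCommClass F R R]
    [IsScalarTower F R R]
    (ℬ : G → Submodule F R) [DirectSum.Decomposition ℬ]
    (m : ℕ) (b : Module.Basis (Fin m) F R) (deg : Fin m → G) (hb : ∀ i, b i ∈ ℬ (deg i))
    (hS : ∀ i j l, b.repr (b i * b j) l ∈ S) :
    IsGradedIsoToModel R ℬ (grfinModel S m (fun i j l => ⟨_, hS i j l⟩, deg)) :=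
  ⟨b.equivFun, grfin_mul_eq R m b, grfin_grading_eq R ℬ m b deg hb⟩

lemma grfin_finite_set {F : Type u} [Field F] (N : ℕ) (hN : 0 < N) :
    {c : F | c = 0 ∨ c ^ N = 1}.Finite := by
  have h : {c : F | c ^ N = 1}.Finite := by
    have h0 : (Polynomial.X ^ N - 1 : Polynomial F) ≠ 0 := by
      simpa using Polynomial.X_pow_sub_C_ne_zero hN (1 : F)
    refine (Polynomial.finite_setOfPred_isRoot h0).subset ?_
    intro c hc
    have hc : c ^ N = 1 := hc
    simp [Polynomial.IsRoot, hc]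
  exact (Set.finite_singleton (0 : F)).union h

/-- For a finite group `G` whose order is invertible in an algebraically closed field
`F`: (i) there are, up to graded isomorphism, only finitely many finite-dimensional
`G`-graded division algebras over `F`; (ii) for every `n ≥ 1` there are, up to graded
isomorphism, only finitely many `n`-dimensional `G`-graded simple algebras over `F`. -/
theorem stmt_15 {G : Type v} [Group G] [Finite G] [DecidableEq G]
    {F : Type u} [Field F] [IsAlgClosed F]
    (hcard : IsUnit ((Nat.card G : F))) :
    -- (i) finitely many graded division algebras:
    (∃ T : Set (GradedAlgModel G F), T.Finite ∧
      ∀ (R : Type u) [Ring R] [Algebra F R] [FiniteDimensional F R]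
        (ℬ : G → Submodule F R) [DirectSum.Decomposition ℬ],
        (∀ g h : G, ∀ x ∈ ℬ g, ∀ y ∈ ℬ h, x * y ∈ ℬ (g * h)) →
        (1 : R) ∈ ℬ (1 : G) →
        (∀ g : G, ∀ x ∈ ℬ g, x ≠ 0 → IsUnit x) →
        ∃ s ∈ T, IsGradedIsoToModel R ℬ s) ∧
    -- (ii) for each `n ≥ 1`, finitely many `n`-dimensional graded simple algebras:
    ∀ n : ℕ, 1 ≤ n →
      ∃ T : Set (GradedAlgModel G F), T.Finite ∧
        ∀ (R : Type u) [NonUnitalRing R] [Module F R] [SMulCommClass F R R]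
          [IsScalarTower F R R] [FiniteDimensional F R]
          (ℬ : G → Submodule F R) [DirectSum.Decomposition ℬ],
          (∀ g h : G, ∀ x ∈ ℬ g, ∀ y ∈ ℬ h, x * y ∈ ℬ (g * h)) →
          Module.finrank F R = n →
          (∃ x y : R, x * y ≠ 0) →
          (∀ J : TwoSidedIdeal R,
            (∀ x ∈ J, ∀ g : G, ((DirectSum.decompose ℬ x) g : R) ∈ J) → J = ⊥ ∨ J = ⊤) →
          ∃ s ∈ T, IsGradedIsoToModel R ℬ s := by
  classical
  set N := (Nat.card G).factorial with hN
  have hNpos : 0 < N := Nat.factorial_pos _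
  let S : Set F := {c : F | c = 0 ∨ c ^ N = 1}
  haveI hSf : Finite S := (grfin_finite_set N hNpos).to_subtype
  have hTf : ∀ m, (Set.range (grfinModel (G := G) S m)).Finite := fun m => Set.finite_range _
  constructor
  · refine ⟨⋃ m ∈ Finset.range (Nat.card G + 1), Set.range (grfinModel (G := G) S m),
      Set.Finite.biUnion (Finset.finite_toSet _) fun m _ => hTf m, ?_⟩
    intro R _ _ _ ℬ _ hmul h1 hunit
    have hX : ∃ X : G → R, (∀ h, X h ∈ ℬ h) ∧ (∀ h, 1 * X h = X h) ∧ (∀ h, X h * 1 = X h) ∧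
      (∀ h, ∀ x ∈ ℬ h, 1 * x = x → x * 1 = x → ∃ c : F, x = c • X h) ∧
      ∀ a b, X a ≠ 0 → X b ≠ 0 → X (a * b) ≠ 0 ∧
        ∃ c : F, c ^ (Nat.card G).factorial = 1 ∧ X a * X b = c • X (a * b) := by
      by_cases h01 : (1 : R) = 0
      · have hz : ∀ x : R, x = 0 := fun x => by rw [← mul_one x, h01, mul_zero]
        exact ⟨fun _ => 0, fun h => Submodule.zero_mem _, fun h => hz _, fun h => hz _,
          fun h x _ _ _ => ⟨0, by rw [zero_smul]; exact hz x⟩, fun a b h => absurd rfl h⟩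
      · refine GrFin.exists_X ℬ hmul 1 h1 h01 (mul_one 1) ?_
        intro g x hx _ _ hx0
        obtain ⟨y, hy⟩ := (hunit g x hx hx0).exists_left_inv
        refine ⟨GrFin.pr ℬ g⁻¹ y, GrFin.pr_mem ℬ _ _, one_mul _, mul_one _, ?_⟩
        have := GrFin.pr_mul_right ℬ hmul hx 1 y
        rw [hy, GrFin.pr_of_mem ℬ h1, if_pos rfl, one_mul] at this
        exact this.symm
    obtain ⟨X, hXm, hX1, hX2, hXs, hXX⟩ := hX
    obtain ⟨b, deg, hb, hS⟩ := GrFin.exists_basis ℬ hmul N 1 1 X hXm hX1 hX2 hXs hXX h1 (mul_one 1)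
      (fun _ => 1) (fun _ => 1) (fun _ => 1) (fun _ => h1) (fun _ => by simpa using h1)
      (fun _ => mul_one 1) (fun _ => mul_one 1)
      (fun i j => by simp [Subsingleton.elim i j]) (by simp) (by simp)
    refine ⟨_, ?_, grfin_iso S R ℬ _ b deg hb hS⟩
    haveI := Fintype.ofFinite G
    have hle : Module.finrank F R ≤ Nat.card G := by
      have hsp : Submodule.span F (Set.range X) = ⊤ := by
        rw [eq_top_iff]
        intro x _
        induction x using GrFin.hom_induction ℬ with
        | h0 => exact Submodule.zero_mem _
        | hh g x hx =>
          obtain ⟨c, rfl⟩ := hXs g x hx (one_mul _) (mul_one _)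
          exact Submodule.smul_mem _ _ (Submodule.subset_span ⟨g, rfl⟩)
        | ha x y hx hy => exact Submodule.add_mem _ (hx trivial) (hy trivial)
      have := finrank_range_le_card (R := F) X
      rw [Set.finrank, hsp, finrank_top] at this
      rwa [Nat.card_eq_fintype_card]
    exact Set.mem_biUnion (by simpa using Nat.lt_succ_of_le hle) ⟨_, rfl⟩
  · intro n _
    refine ⟨Set.range (grfinModel (G := G) S n), hTf n, ?_⟩
    intro R _ _ _ _ _ ℬ _ hmul hn hne hs
    obtain ⟨e, he1, he0, hee, hinv⟩ := GrFin.exists_idem ℬ hmul hs hne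
    obtain ⟨X, hXm, hX1, hX2, hXs, hXX⟩ := GrFin.exists_X ℬ hmul e he1 he0 hee hinv
    obtain ⟨k, u, v, d, hu, hv, hue, hev, hvu, hl, hr⟩ :=
      GrFin.exists_units ℬ hmul hs hne e he1 he0 hee hinv
    obtain ⟨b, deg, hb, hS⟩ := GrFin.exists_basis ℬ hmul N k e X hXm hX1 hX2 hXs hXX he1 hee
      u v d hu hv hue hev hvu hl hr
    subst hn
    exact ⟨_, ⟨_, rfl⟩, grfin_iso S R ℬ _ b deg hb hS⟩
end
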